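/- arXiv:1605.03310 — 7 statements merged into one kernel-verified Lean document; each statement's English description precedes it below -/
import Mathlib

section
/- Let g : ℝ → ℝ be continuous and let λ > 0. Define f : ℝ → ℝ by f(t) = g(t) + λ·1_{t ≠ 0}, where 1_{t ≠ 0} equals 0 if t = 0 and 1 otherwise. Then there exists τ > 0 (depending only on g and λ) such that every global minimizer t* of f (i.e., f(t*) ≤ f(t) for all t ∈ ℝ) satisfies either t* = 0 or |t*| ≥ τ. -/
/-- Hard-thresholding property in one dimension: minimizing a continuous function plus
an `L₀` penalty `λ·1_{t ≠ 0}` forces every nonzero global minimizer away from zero by a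
fixed positive threshold depending only on `g` and `λ`. -/
theorem hard_thresholding_one_dim (g : ℝ → ℝ) (hg : Continuous g)
    (lam : ℝ) (hlam : 0 < lam)
    (f : ℝ → ℝ) (hf : ∀ t : ℝ, f t = g t + if t = 0 then 0 else lam) :
    ∃ τ : ℝ, 0 < τ ∧ ∀ t : ℝ, (∀ s : ℝ, f t ≤ f s) → t = 0 ∨ τ ≤ |t| := by
  obtain ⟨τ, hτ, h⟩ := Metric.continuous_iff.mp hg 0 lam hlam
  refine ⟨τ, hτ, fun t ht => ?_⟩
  by_contra! hc
  obtain ⟨h0, hlt⟩ := hc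
  have h1 := h t (by simpa [Real.dist_eq] using hlt)
  have h2 := ht 0
  rw [hf, hf, if_neg h0, if_pos rfl] at h2
  rw [Real.dist_eq] at h1
  have h3 := (abs_lt.mp h1).1
  linarith
end

section
/- Assume the bounded-variance condition, the concave-penalty condition, and the sparse-eigenvalue condition with constants c > 0 and κ. Let β₀ ∈ B_{τ,κ} and let β̂ be a global minimizer of Q_n over B_{τ,κ}; set δ = β̂ − β₀. Then ‖δ‖₂² ≤ c⁻¹·n⁻¹‖Xδ‖₂² and n⁻¹‖Xδ‖₂² ≤ 2c₂⁻¹·(‖n⁻¹Xᵀε‖_∞ + c₃λ)·‖δ‖₁, where ‖·‖_∞ is the maximum absolute coordinate and ‖·‖₁, ‖·‖₂ are the ℓ₁ and ℓ₂ norms on ℝ^p. -/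
open scoped BigOperators Classical

/-- The number of nonzero coordinates of a vector (the `L₀` "norm"). -/
noncomputable def l0 {p : ℕ} (v : Fin p → ℝ) : ℕ :=
  (Finset.univ.filter fun j => v j ≠ 0).card

/-- The thresholded parameter space `B_{τ,κ}`: vectors with fewer than `κ/2` nonzero
coordinates, each nonzero coordinate having magnitude at least `τ`. -/
def Bset {p : ℕ} (τ : ℝ) (κ : ℕ) : Set (Fin p → ℝ) :=
  {β | 2 * l0 β < κ ∧ ∀ j, β j = 0 ∨ τ ≤ |β j|}

/-- The penalized negative log-likelihood
`Q_n(β) = −n⁻¹(yᵀXβ − Σᵢ b((Xβ)ᵢ)) + Σⱼ p_λ(|β_j|)`. -/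
noncomputable def Qn {n p : ℕ} (X : Matrix (Fin n) (Fin p) ℝ) (y : Fin n → ℝ)
    (b : ℝ → ℝ) (pen : ℝ → ℝ) (β : Fin p → ℝ) : ℝ :=
  -(1 / (n : ℝ)) * (∑ i, y i * X.mulVec β i - ∑ i, b (X.mulVec β i)) + ∑ j, pen |β j|

theorem aux_b (b : ℝ → ℝ) (hb : ContDiff ℝ 2 b) (c₂ : ℝ)
    (hvar : ∀ θ : ℝ, c₂ ≤ deriv (deriv b) θ) (u v : ℝ) :
    b v + deriv b v * (u - v) + c₂ / 2 * (u - v) ^ 2 ≤ b u := by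
  have hd : Differentiable ℝ b := hb.differentiable (by norm_num)
  have hd2 : Differentiable ℝ (deriv b) := by
    have h1 : ContDiff ℝ 1 (deriv b) := by
      have := (contDiff_succ_iff_deriv (n := 1) (f := b) (𝕜 := ℝ)).1 (by
        have e : ((1 : WithTop ℕ∞) + 1) = 2 := by norm_num
        rw [e]; exact hb)
      exact this.2.2
    exact h1.differentiable (by norm_num)
  have hg : ∀ t, HasDerivAt (fun t => b t - (deriv b v * (t - v) + c₂ / 2 * (t - v) ^ 2))
      (deriv b t - (deriv b v + c₂ * (t - v))) t := by
    intro t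
    have h1 : HasDerivAt (fun t : ℝ => t - v) 1 t := (hasDerivAt_id t).sub_const v
    have := (hd t).hasDerivAt.sub ((h1.const_mul (deriv b v)).add ((h1.pow 2).const_mul (c₂ / 2)))
    refine this.congr_deriv ?_
    norm_num
    ring
  have hg2 : ∀ t, HasDerivAt (fun t => deriv b t - (deriv b v + c₂ * (t - v)))
      (deriv (deriv b) t - c₂) t := by
    intro t
    have h1 : HasDerivAt (fun t : ℝ => t - v) 1 t := (hasDerivAt_id t).sub_const v
    have := (hd2 t).hasDerivAt.sub ((h1.const_mul c₂).const_add (deriv b v))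
    refine this.congr_deriv ?_
    norm_num
  have hconv : ConvexOn ℝ Set.univ
      (fun t => b t - (deriv b v * (t - v) + c₂ / 2 * (t - v) ^ 2)) := by
    refine convexOn_of_hasDerivWithinAt2_nonneg convex_univ
      (fun t _ => (hg t).continuousAt.continuousWithinAt)
      (fun t _ => (hg t).hasDerivWithinAt) (fun t _ => (hg2 t).hasDerivWithinAt) ?_
    intro t _
    linarith [hvar t]
  have h0 := hg v
  rcases lt_trichotomy u v with h | h | h
  · have := hconv.slope_le_of_hasDerivAt (Set.mem_univ u) (Set.mem_univ v) h h0
    rw [slope_def_field, div_le_iff₀ (by linarith)] at this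
    norm_num at this
    linarith
  · subst h; simp
  · have := hconv.le_slope_of_hasDerivAt (Set.mem_univ v) (Set.mem_univ u) h h0
    rw [slope_def_field, le_div_iff₀ (by linarith)] at this
    norm_num at this
    linarith

theorem aux_pen (pen : ℝ → ℝ) (L : ℝ) (hL : 0 ≤ L)
    (hmono : MonotoneOn pen (Set.Ici 0))
    (hconc : ConcaveOn ℝ (Set.Ici 0) pen)
    (hpend0 : HasDerivWithinAt pen L (Set.Ici 0) 0) (x z : ℝ) :
    pen |x| - pen |z| ≤ L * |z - x| := by
  have hx := abs_nonneg x
  have hz := abs_nonneg z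
  have htri : |x| - |z| ≤ |z - x| := by
    rw [abs_sub_comm]; exact abs_sub_abs_le_abs_sub x z
  have hpos : 0 ≤ L * |z - x| := mul_nonneg hL (abs_nonneg _)
  rcases le_or_gt |x| |z| with h | h
  · have := hmono hx hz h
    linarith
  · refine le_trans ?_ (mul_le_mul_of_nonneg_left htri hL)
    rcases hz.eq_or_lt with h0 | h0
    · rw [← h0] at h ⊢
      have := hconc.slope_le_of_hasDerivWithinAt (Set.mem_Ici.2 le_rfl) hx h hpend0
      rwa [slope_def_field, div_le_iff₀ (by linarith)] at this
    · have h1 := hconc.slope_le_of_hasDerivWithinAt (Set.mem_Ici.2 le_rfl) hz h0 hpend0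
      have h2 := hconc.slope_anti_adjacent (Set.mem_Ici.2 le_rfl) hx h0 h
      rw [slope_def_field] at h1
      have := h2.trans h1
      rwa [div_le_iff₀ (by linarith)] at this

theorem aux_l0 {p : ℕ} (u v : Fin p → ℝ) : l0 (u - v) ≤ l0 u + l0 v := by
  unfold l0
  refine le_trans (Finset.card_le_card ?_) (Finset.card_union_le _ _)
  intro j
  simp only [Finset.mem_filter, Finset.mem_univ, true_and, Finset.mem_union, Pi.sub_apply]
  intro h
  by_contra hc
  push Not at hc
  exact h (by rw [hc.1, hc.2, sub_zero])

/-- Lemma 1 of the paper (basic inequality): under the bounded-variance, concave-penalty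
and sparse-eigenvalue conditions, for any global minimizer `β̂` of `Q_n` over `B_{τ,κ}`,
the error `δ = β̂ − β₀` satisfies
`‖δ‖₂² ≤ c⁻¹ n⁻¹‖Xδ‖₂²` and `n⁻¹‖Xδ‖₂² ≤ 2c₂⁻¹(‖n⁻¹Xᵀε‖_∞ + c₃λ)‖δ‖₁`. -/
theorem basic_inequality {n p : ℕ} (hn : 0 < n) (hp : 0 < p)
    (X : Matrix (Fin n) (Fin p) ℝ) (b : ℝ → ℝ) (hb : ContDiff ℝ 2 b)
    (β₀ : Fin p → ℝ) (ε : Fin n → ℝ) (y : Fin n → ℝ)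
    (hy : ∀ i, y i = deriv b (X.mulVec β₀ i) + ε i)
    -- bounded-variance condition
    (c₂ : ℝ) (hc₂ : 0 < c₂) (hc₂1 : c₂ ≤ 1)
    (hvar : ∀ θ : ℝ, c₂ ≤ deriv (deriv b) θ ∧ deriv (deriv b) θ ≤ c₂⁻¹)
    -- concave-penalty condition
    (pen : ℝ → ℝ) (lam c₃ : ℝ) (hc₃ : 0 < c₃) (hlam : 0 ≤ lam)
    (hmono : MonotoneOn pen (Set.Ici 0))
    (hconc : ConcaveOn ℝ (Set.Ici 0) pen)
    (hpen0 : pen 0 = 0)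
    (hpendiff : DifferentiableOn ℝ pen (Set.Ioi 0))
    (hpend0 : HasDerivWithinAt pen (c₃ * lam) (Set.Ici 0) 0)
    -- sparse-eigenvalue (robust spark) condition
    (c : ℝ) (hc : 0 < c) (κ : ℕ)
    (hse : ∀ v : Fin p → ℝ, l0 v < κ →
      c * ∑ j, (v j) ^ 2 ≤ (1 / (n : ℝ)) * ∑ i, (X.mulVec v i) ^ 2)
    -- thresholded parameter space and global minimizer
    (τ : ℝ) (hτ : 0 < τ) (hβ₀ : β₀ ∈ Bset τ κ)
    (βh : Fin p → ℝ) (hβh : βh ∈ Bset τ κ)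
    (hmin : ∀ β ∈ Bset τ κ, Qn X y b pen βh ≤ Qn X y b pen β) :
    (∑ j, (βh j - β₀ j) ^ 2 ≤
        c⁻¹ * ((1 / (n : ℝ)) * ∑ i, (X.mulVec (βh - β₀) i) ^ 2)) ∧
    ((1 / (n : ℝ)) * ∑ i, (X.mulVec (βh - β₀) i) ^ 2 ≤
        2 * c₂⁻¹ * ((⨆ j, |(1 / (n : ℝ)) * ∑ i, X i j * ε i|) + c₃ * lam) *
          ∑ j, |βh j - β₀ j|) := by
  constructor
  · have hl : l0 (βh - β₀) < κ := by
      have h1 := aux_l0 βh β₀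
      have h2 := hβ₀.1
      have h3 := hβh.1
      omega
    have h := hse _ hl
    simp only [Pi.sub_apply] at h
    rw [inv_mul_eq_div, le_div_iff₀ hc]
    linarith
  · have hn' : (0 : ℝ) < 1 / (n : ℝ) := by positivity
    have hL : 0 ≤ c₃ * lam := by positivity
    have hd : ∀ i, X.mulVec (βh - β₀) i = X.mulVec βh i - X.mulVec β₀ i := by
      intro i; rw [Matrix.mulVec_sub]; rfl
    have hq := hmin β₀ hβ₀
    unfold Qn at hq
    have hpen : ∑ j, pen |β₀ j| - ∑ j, pen |βh j| ≤ c₃ * lam * ∑ j, |βh j - β₀ j| := by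
      rw [← Finset.sum_sub_distrib, Finset.mul_sum]
      exact Finset.sum_le_sum fun j _ => aux_pen pen _ hL hmono hconc hpend0 _ _
    have hbs : c₂ / 2 * ∑ i, (X.mulVec (βh - β₀) i) ^ 2 - ∑ i, ε i * X.mulVec (βh - β₀) i ≤
        (∑ i, y i * X.mulVec β₀ i - ∑ i, b (X.mulVec β₀ i))
          - (∑ i, y i * X.mulVec βh i - ∑ i, b (X.mulVec βh i)) := by
      rw [Finset.mul_sum, ← Finset.sum_sub_distrib, ← Finset.sum_sub_distrib,
        ← Finset.sum_sub_distrib, ← Finset.sum_sub_distrib]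
      refine Finset.sum_le_sum fun i _ => ?_
      have := aux_b b hb c₂ (fun θ => (hvar θ).1) (X.mulVec βh i) (X.mulVec β₀ i)
      rw [hd, hy]
      linarith
    have hbs2 := mul_le_mul_of_nonneg_left hbs hn'.le
    have heps : (1 / (n : ℝ)) * ∑ i, ε i * X.mulVec (βh - β₀) i ≤
        (⨆ j, |(1 / (n : ℝ)) * ∑ i, X i j * ε i|) * ∑ j, |βh j - β₀ j| := by
      have e : (1 / (n : ℝ)) * ∑ i, ε i * X.mulVec (βh - β₀) i =
          ∑ j, ((1 / (n : ℝ)) * ∑ i, X i j * ε i) * (βh j - β₀ j) := by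
        simp only [Matrix.mulVec, dotProduct, Finset.mul_sum, Finset.sum_mul, Pi.sub_apply]
        rw [Finset.sum_comm]
        refine Finset.sum_congr rfl fun j _ => Finset.sum_congr rfl fun i _ => ?_
        ring
      rw [e, Finset.mul_sum]
      refine Finset.sum_le_sum fun j _ => ?_
      refine (le_abs_self _).trans ?_
      rw [abs_mul]
      refine mul_le_mul_of_nonneg_right ?_ (abs_nonneg _)
      exact le_ciSup (f := fun j => |(1 / (n : ℝ)) * ∑ i, X i j * ε i|)
        (Set.finite_range _).bddAbove j
    have key : c₂ / 2 * ((1 / (n : ℝ)) * ∑ i, (X.mulVec (βh - β₀) i) ^ 2) ≤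
        ((⨆ j, |(1 / (n : ℝ)) * ∑ i, X i j * ε i|) + c₃ * lam) * ∑ j, |βh j - β₀ j| := by
      linarith
    have h2 := mul_le_mul_of_nonneg_left key (show 0 ≤ 2 * c₂⁻¹ by positivity)
    have e2 : ∀ t : ℝ, 2 * c₂⁻¹ * (c₂ / 2 * t) = t := by
      intro t; field_simp
    rw [e2] at h2
    linarith
end

section
/- Assume b : ℝ → ℝ is twice continuously differentiable with b''(θ) ≥ c₂ > 0 for all θ, assume the sparse-eigenvalue condition with constants c > 0 and κ ≥ 1, and assume the penalty p_λ : [0,∞) → ℝ is continuous and nonnegative. Then Q_n attains its minimum over the thresholded parameter space: there exists β̂ ∈ B_{τ,κ} such that Q_n(β̂) ≤ Q_n(β) for all β ∈ B_{τ,κ}. -/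
open scoped BigOperators Classical

lemma aux_lower (b : ℝ → ℝ) (hb : ContDiff ℝ 2 b) (c₂ : ℝ) (hc₂ : 0 < c₂)
    (hvar : ∀ θ : ℝ, c₂ ≤ deriv (deriv b) θ) (y : ℝ) :
    ∃ K : ℝ, ∀ θ : ℝ, K + c₂ / 4 * θ ^ 2 ≤ b θ - y * θ := by
  have hd : Differentiable ℝ b := hb.differentiable (by norm_num)
  have hd' : Differentiable ℝ (deriv b) := by
    have h := hb.iterate_deriv' 1 1
    exact h.differentiable (by norm_num)
  have h1 : ∀ θ, HasDerivAt (fun θ => b θ - c₂ / 2 * θ ^ 2) (deriv b θ - c₂ * θ) θ := by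
    intro θ
    have := (hd θ).hasDerivAt.sub ((hasDerivAt_pow 2 θ).const_mul (c₂ / 2))
    refine this.congr_deriv ?_
    simp; ring
  have h1' : deriv (fun θ => b θ - c₂ / 2 * θ ^ 2) = fun θ => deriv b θ - c₂ * θ :=
    funext fun θ => (h1 θ).deriv
  have h2 : ∀ θ, HasDerivAt (fun θ => deriv b θ - c₂ * θ) (deriv (deriv b) θ - c₂) θ := by
    intro θ
    have := (hd' θ).hasDerivAt.sub ((hasDerivAt_id θ).const_mul c₂)
    refine this.congr_deriv ?_
    simp
  have hconv : ConvexOn ℝ Set.univ (fun θ => b θ - c₂ / 2 * θ ^ 2) := by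
    apply convexOn_univ_of_deriv2_nonneg
    · exact fun θ => (h1 θ).differentiableAt
    · rw [h1']; exact fun θ => (h2 θ).differentiableAt
    · intro θ
      simp only [Function.iterate_succ, Function.iterate_zero, Function.comp, id]
      rw [h1', (h2 θ).deriv]
      linarith [hvar θ]
  have htan : ∀ θ, b 0 + deriv b 0 * θ ≤ b θ - c₂ / 2 * θ ^ 2 := by
    intro θ
    have h0 := h1 0
    rcases lt_trichotomy θ 0 with h | h | h
    · have := hconv.slope_le_of_hasDerivAt (Set.mem_univ θ) (Set.mem_univ 0) h h0
      rw [slope_def_field, div_le_iff₀ (by linarith)] at this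
      norm_num at this
      linarith
    · subst h; simp
    · have := hconv.le_slope_of_hasDerivAt (Set.mem_univ 0) (Set.mem_univ θ) h h0
      rw [slope_def_field, le_div_iff₀ (by linarith)] at this
      norm_num at this
      linarith
  refine ⟨b 0 - (deriv b 0 - y) ^ 2 / c₂, fun θ => ?_⟩
  have h3 : 0 ≤ (c₂ / 2 * θ + (deriv b 0 - y)) ^ 2 / c₂ := by positivity
  have h4 : (c₂ / 2 * θ + (deriv b 0 - y)) ^ 2 / c₂
      = c₂ / 4 * θ ^ 2 + (deriv b 0 - y) * θ + (deriv b 0 - y) ^ 2 / c₂ := by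
    field_simp; ring
  linarith [htan θ]

lemma Bset_closed {p : ℕ} (τ : ℝ) (hτ : 0 < τ) (κ : ℕ) :
    IsClosed (Bset τ κ : Set (Fin p → ℝ)) := by
  have : (Bset τ κ : Set (Fin p → ℝ)) = ⋃ S ∈ {S : Finset (Fin p) | 2 * S.card < κ},
      {β : Fin p → ℝ | ∀ j, (j ∉ S → β j = 0) ∧ (j ∈ S → τ ≤ |β j|)} := by
    ext β
    simp only [Bset, Set.mem_ofPred_eq, Set.mem_iUnion, exists_prop]
    constructor
    · rintro ⟨h1, h2⟩
      refine ⟨_, h1, fun j => ⟨fun h => ?_, fun h => ?_⟩⟩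
      · simpa using h
      · have : β j ≠ 0 := by simpa using h
        exact (h2 j).resolve_left this
    · rintro ⟨S, h1, h2⟩
      refine ⟨?_, fun j => ?_⟩
      · have : l0 β ≤ S.card := by
          apply Finset.card_le_card
          intro j hj
          by_contra h
          simp [(h2 j).1 h] at hj
        omega
      · by_cases h : j ∈ S
        · exact Or.inr ((h2 j).2 h)
        · exact Or.inl ((h2 j).1 h)
  rw [this]
  apply Set.Finite.isClosed_biUnion (Set.toFinite _)
  intro S _
  rw [Set.ofPred_forall]
  apply isClosed_iInter
  intro j
  by_cases h : j ∈ S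
  · simp only [h, not_true_eq_false, false_imp_iff, true_and, true_imp_iff]
    exact isClosed_le continuous_const (continuous_apply j).abs
  · simp only [h, not_false_eq_true, true_imp_iff, false_imp_iff, and_true]
    exact isClosed_eq (continuous_apply j) continuous_const

/-- Existence part of Theorem 1: under strong convexity of `b` (`b'' ≥ c₂ > 0`), the
sparse-eigenvalue condition, and a continuous nonnegative penalty, `Q_n` attains its
minimum over the thresholded parameter space `B_{τ,κ}`. -/
theorem global_minimizer_exists {n p : ℕ} (hn : 0 < n) (hp : 0 < p)
    (X : Matrix (Fin n) (Fin p) ℝ) (y : Fin n → ℝ)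
    (b : ℝ → ℝ) (hb : ContDiff ℝ 2 b)
    (c₂ : ℝ) (hc₂ : 0 < c₂) (hvar : ∀ θ : ℝ, c₂ ≤ deriv (deriv b) θ)
    (c : ℝ) (hc : 0 < c) (κ : ℕ) (hκ : 1 ≤ κ)
    (hse : ∀ v : Fin p → ℝ, l0 v < κ →
      c * ∑ j, (v j) ^ 2 ≤ (1 / (n : ℝ)) * ∑ i, (X.mulVec v i) ^ 2)
    (pen : ℝ → ℝ) (hpenc : ContinuousOn pen (Set.Ici 0))
    (hpennn : ∀ t : ℝ, 0 ≤ t → 0 ≤ pen t)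
    (τ : ℝ) (hτ : 0 < τ) :
    ∃ βh ∈ Bset τ κ, ∀ β ∈ Bset τ κ, Qn X y b pen βh ≤ Qn X y b pen β := by
  have h0 : (0 : Fin p → ℝ) ∈ Bset τ κ := by
    refine ⟨?_, fun j => Or.inl rfl⟩
    simp [l0]; omega
  have hXc : ∀ i, Continuous fun β : Fin p → ℝ => X.mulVec β i := fun i =>
    (continuous_apply i).comp (Continuous.matrix_mulVec continuous_const continuous_id)
  have hpc : ∀ j, Continuous fun β : Fin p → ℝ => pen |β j| := fun j =>
    hpenc.comp_continuous (continuous_apply j).abs (fun β => Set.mem_Ici.2 (abs_nonneg _))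
  have hQ : Continuous (Qn X y b pen) := by
    unfold Qn
    refine (continuous_const.mul (Continuous.sub ?_ ?_)).add ?_
    · exact continuous_finsetSum _ fun i _ => continuous_const.mul (hXc i)
    · exact continuous_finsetSum _ fun i _ => hb.continuous.comp (hXc i)
    · exact continuous_finsetSum _ fun j _ => hpc j
  choose K hK using fun i => aux_lower b hb c₂ hc₂ hvar (y i)
  have hn' : (0 : ℝ) < n := by exact_mod_cast hn
  have hlow : ∀ β ∈ Bset τ κ, (1 / (n : ℝ)) * ∑ i, K i + c₂ / 4 * c * ‖β‖ ^ 2 ≤ Qn X y b pen β := by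
    intro β hβ
    have hs := hse β (by have := hβ.1; omega)
    have hnorm : ‖β‖ ^ 2 ≤ ∑ j, (β j) ^ 2 := by
      have hle : ‖β‖ ≤ Real.sqrt (∑ j, (β j) ^ 2) := by
        rw [pi_norm_le_iff_of_nonneg (Real.sqrt_nonneg _)]
        intro j
        rw [Real.norm_eq_abs]
        apply Real.abs_le_sqrt
        exact Finset.single_le_sum (f := fun j => (β j) ^ 2) (fun j _ => sq_nonneg _)
          (Finset.mem_univ j)
      exact (Real.le_sqrt (norm_nonneg _) (Finset.sum_nonneg fun j _ => sq_nonneg _)).1 hle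
    have hpen : 0 ≤ ∑ j, pen |β j| := Finset.sum_nonneg fun j _ => hpennn _ (abs_nonneg _)
    have hsum : ∑ i, K i + c₂ / 4 * ∑ i, (X.mulVec β i) ^ 2
        ≤ ∑ i, b (X.mulVec β i) - ∑ i, y i * X.mulVec β i := by
      rw [Finset.mul_sum, ← Finset.sum_add_distrib, ← Finset.sum_sub_distrib]
      exact Finset.sum_le_sum fun i _ => hK i _
    have h1 := mul_le_mul_of_nonneg_left hsum (one_div_pos.2 hn').le
    have h2 : c₂ / 4 * (c * ‖β‖ ^ 2) ≤ c₂ / 4 * ((1 / (n : ℝ)) * ∑ i, (X.mulVec β i) ^ 2) := by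
      apply mul_le_mul_of_nonneg_left _ (by positivity)
      exact (mul_le_mul_of_nonneg_left hnorm hc.le).trans hs
    unfold Qn
    linarith
  have hA : 0 < c₂ / 4 * c := by positivity
  have ht : Filter.Tendsto (fun β : Fin p → ℝ => c₂ / 4 * c * ‖β‖ ^ 2)
      (Filter.cocompact _) Filter.atTop :=
    Filter.Tendsto.const_mul_atTop hA
      ((Filter.tendsto_pow_atTop two_ne_zero).comp (tendsto_norm_cocompact_atTop))
  obtain ⟨x, hx, hmin⟩ := hQ.continuousOn.exists_isMinOn' (Bset_closed τ hτ κ) h0 (by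
    rw [Filter.eventually_inf_principal]
    filter_upwards [ht.eventually_ge_atTop
      (Qn X y b pen 0 - (1 / (n : ℝ)) * ∑ i, K i)] with β h hβ
    linarith [hlow β hβ])
  exact ⟨x, hx, fun β hβ => hmin hβ⟩
end

section
/- Assume b : ℝ → ℝ is twice continuously differentiable with b''(θ) ≥ c₂ > 0 for all θ, and assume the sparse-eigenvalue condition with constants c > 0 and κ. Let α₀ = supp(β₀) with s = |α₀| < κ, and suppose β* ∈ ℝ^p with supp(β*) ⊆ α₀ satisfies the first-order condition x̃_jᵀ(y − b'(Xβ*)) = 0 for every j ∈ α₀, where b' is applied componentwise and x̃_j is the j-th column of X. Then ‖β* − β₀‖₂ ≤ (c·c₂)⁻¹·‖n⁻¹X_{α₀}ᵀε‖₂ ≤ (c·c₂)⁻¹·√s·‖n⁻¹X_{α₀}ᵀε‖_∞, where X_{α₀} is the submatrix of X with columns indexed by α₀. -/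
open scoped BigOperators Classical

/-- Deterministic bound (e064)/(e079) for the oracle-assisted maximum likelihood
estimator: under `b'' ≥ c₂ > 0` and the sparse-eigenvalue condition, any `β*` supported
on the true support `α₀` (with `s = |α₀| < κ`) satisfying the first-order condition
`x̃_jᵀ(y − b'(Xβ*)) = 0` for all `j ∈ α₀` obeys
`‖β* − β₀‖₂ ≤ (c·c₂)⁻¹‖n⁻¹X_{α₀}ᵀε‖₂ ≤ (c·c₂)⁻¹ √s ‖n⁻¹X_{α₀}ᵀε‖_∞`. -/
theorem oracle_mle_bound {n p : ℕ} (hn : 0 < n) (hp : 0 < p)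
    (X : Matrix (Fin n) (Fin p) ℝ)
    (b : ℝ → ℝ) (hb : ContDiff ℝ 2 b)
    (c₂ : ℝ) (hc₂ : 0 < c₂) (hvar : ∀ θ : ℝ, c₂ ≤ deriv (deriv b) θ)
    (c : ℝ) (hc : 0 < c) (κ : ℕ)
    (hse : ∀ v : Fin p → ℝ, l0 v < κ →
      c * ∑ j, (v j) ^ 2 ≤ (1 / (n : ℝ)) * ∑ i, (X.mulVec v i) ^ 2)
    (β₀ : Fin p → ℝ) (ε : Fin n → ℝ) (y : Fin n → ℝ)
    (hy : ∀ i, y i = deriv b (X.mulVec β₀ i) + ε i)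
    (α₀ : Finset (Fin p)) (hα₀ : ∀ j, j ∈ α₀ ↔ β₀ j ≠ 0)
    (s : ℕ) (hs : s = α₀.card) (hsκ : s < κ)
    (βstar : Fin p → ℝ) (hsupp : ∀ j, βstar j ≠ 0 → j ∈ α₀)
    (hfoc : ∀ j ∈ α₀, ∑ i, X i j * (y i - deriv b (X.mulVec βstar i)) = 0) :
    Real.sqrt (∑ j, (βstar j - β₀ j) ^ 2) ≤
        (c * c₂)⁻¹ * Real.sqrt (∑ j ∈ α₀, ((1 / (n : ℝ)) * ∑ i, X i j * ε i) ^ 2) ∧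
    (c * c₂)⁻¹ * Real.sqrt (∑ j ∈ α₀, ((1 / (n : ℝ)) * ∑ i, X i j * ε i) ^ 2) ≤
        (c * c₂)⁻¹ * Real.sqrt (s : ℝ) *
          ⨆ j ∈ α₀, |(1 / (n : ℝ)) * ∑ i, X i j * ε i| := by
  have hmono : ∀ a a' : ℝ, c₂ * (a - a') ^ 2 ≤ (a - a') * (deriv b a - deriv b a') := by
    have hd : Differentiable ℝ (deriv b) :=
      ((contDiff_succ_iff_deriv (n := 1)).1 (by rw [one_add_one_eq_two]; exact hb)).2.2.differentiable (by norm_num)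
    have key : ∀ a a' : ℝ, a' ≤ a → c₂ * (a - a') ≤ deriv b a - deriv b a' := by
      intro a a' h
      exact mul_sub_le_image_sub_of_le_deriv hd hvar h
    intro a a'
    rcases le_total a' a with h | h
    · nlinarith [key a a' h]
    · nlinarith [key a' a h]
  have hcc : 0 < c * c₂ := mul_pos hc hc₂
  have hn' : (0 : ℝ) < n := by exact_mod_cast hn
  set g : Fin p → ℝ := fun j => (1 / (n : ℝ)) * ∑ i, X i j * ε i with hg
  set δ : Fin p → ℝ := fun j => βstar j - β₀ j with hδ
  have hδ0 : ∀ j, j ∉ α₀ → δ j = 0 := by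
    intro j hj
    have h1 : βstar j = 0 := by
      by_contra h
      exact hj (hsupp j h)
    have h2 : β₀ j = 0 := by
      by_contra h
      exact hj ((hα₀ j).2 h)
    simp [hδ, h1, h2]
  have hl0 : l0 δ < κ := by
    refine lt_of_le_of_lt ?_ hsκ
    rw [hs]
    refine Finset.card_le_card ?_
    intro j hj
    by_contra h
    exact (Finset.mem_filter.1 hj).2 (hδ0 j h)
  have hXδ : ∀ i, X.mulVec δ i = X.mulVec βstar i - X.mulVec β₀ i := by
    intro i
    have : δ = βstar - β₀ := rfl
    rw [this, Matrix.mulVec_sub]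
    rfl
  have hswap : ∀ w : Fin n → ℝ, ∑ i, X.mulVec δ i * w i = ∑ j ∈ α₀, δ j * ∑ i, X i j * w i := by
    intro w
    have h1 : ∑ j ∈ α₀, δ j * ∑ i, X i j * w i = ∑ j, δ j * ∑ i, X i j * w i := by
      refine Finset.sum_subset (Finset.subset_univ _) ?_
      intro j _ hj
      rw [hδ0 j hj, zero_mul]
    rw [h1]
    simp only [Matrix.mulVec, dotProduct, Finset.sum_mul, Finset.mul_sum]
    rw [Finset.sum_comm]
    refine Finset.sum_congr rfl fun j _ => Finset.sum_congr rfl fun i _ => by ring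
  have hz : ∑ i, X.mulVec δ i * (y i - deriv b (X.mulVec βstar i)) = 0 := by
    rw [hswap]
    refine Finset.sum_eq_zero fun j hj => ?_
    rw [hfoc j hj, mul_zero]
  have h1 : c₂ * ∑ i, (X.mulVec δ i) ^ 2 ≤ ∑ i, X.mulVec δ i * ε i := by
    have : ∑ i, (c₂ * (X.mulVec δ i) ^ 2) ≤
        ∑ i, (X.mulVec δ i * ε i - X.mulVec δ i * (y i - deriv b (X.mulVec βstar i))) := by
      refine Finset.sum_le_sum fun i _ => ?_
      have := hmono (X.mulVec βstar i) (X.mulVec β₀ i)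
      rw [hXδ, hy]
      linarith
    rw [Finset.sum_sub_distrib, hz, sub_zero, ← Finset.mul_sum] at this
    exact this
  have h2 : (1 / (n : ℝ)) * ∑ i, X.mulVec δ i * ε i = ∑ j ∈ α₀, δ j * g j := by
    rw [hswap, Finset.mul_sum]
    refine Finset.sum_congr rfl fun j _ => ?_
    simp only [hg]
    ring
  have h3 : ∑ j ∈ α₀, δ j ^ 2 = ∑ j, δ j ^ 2 := by
    refine Finset.sum_subset (Finset.subset_univ _) ?_
    intro j _ hj
    rw [hδ0 j hj]
    norm_num
  have h4 := Real.sum_mul_le_sqrt_mul_sqrt α₀ δ g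
  rw [h3, ← h2] at h4
  have h5 := hse δ hl0
  have hinv : 0 < 1 / (n : ℝ) := by positivity
  have h6 : c * c₂ * ∑ j, δ j ^ 2 ≤ √(∑ j, δ j ^ 2) * √(∑ j ∈ α₀, g j ^ 2) := by
    have e1 := mul_le_mul_of_nonneg_left h5 hc₂.le
    have e2 := mul_le_mul_of_nonneg_left h1 hinv.le
    linarith
  have hD0 : 0 ≤ ∑ j, δ j ^ 2 := Finset.sum_nonneg fun j _ => sq_nonneg _
  have hsq := Real.sq_sqrt hD0
  refine ⟨?_, ?_⟩
  · show √(∑ j, δ j ^ 2) ≤ (c * c₂)⁻¹ * √(∑ j ∈ α₀, g j ^ 2)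
    rw [le_inv_mul_iff₀ hcc]
    rcases (Real.sqrt_nonneg (∑ j, δ j ^ 2)).eq_or_lt with h | h
    · rw [← h, mul_zero]
      exact Real.sqrt_nonneg _
    · refine le_of_mul_le_mul_left ?_ h
      nlinarith
  · rw [mul_assoc]
    refine mul_le_mul_of_nonneg_left ?_ (inv_pos.2 hcc).le
    have hM : ∀ j ∈ α₀, |g j| ≤ ⨆ j ∈ α₀, |g j| := by
      intro j hj
      have e : |g j| = ⨆ (_ : j ∈ α₀), |g j| := by
        haveI : Nonempty (j ∈ α₀) := ⟨hj⟩
        rw [ciSup_const]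
      conv_lhs => rw [e]
      exact le_ciSup (f := fun j => ⨆ (_ : j ∈ α₀), |g j|) (Set.finite_range _).bddAbove j
    have hM0 : 0 ≤ ⨆ j ∈ α₀, |g j| :=
      Real.iSup_nonneg fun j => Real.iSup_nonneg fun _ => abs_nonneg _
    show √(∑ j ∈ α₀, g j ^ 2) ≤ √(s : ℝ) * ⨆ j ∈ α₀, |g j|
    rw [← Real.sqrt_sq hM0, ← Real.sqrt_mul (Nat.cast_nonneg _)]
    refine Real.sqrt_le_sqrt ?_
    rw [hs, ← nsmul_eq_mul]
    refine Finset.sum_le_card_nsmul _ _ _ fun j hj => ?_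
    rw [← sq_abs]
    exact pow_le_pow_left₀ (abs_nonneg _) (hM j hj) 2
end

section
/- Assume the bounded-variance condition (c₂ ≤ b'' ≤ c₂⁻¹, c₂ ∈ (0,1]) and the sparse-eigenvalue condition with constants c > 0 and κ. Let α₀ = supp(β₀) with |α₀| = s < κ, and suppose β̂ ∈ ℝ^p satisfies: supp(β̂) = α₀; |β̂_j| ≥ τ for every j ∈ α₀ (τ > 0); and the stationarity equations n⁻¹·x̃_jᵀ(y − b'(Xβ̂)) = p_λ'(|β̂_j|)·sgn(β̂_j) for every j ∈ α₀, where p_λ satisfies the concave-penalty condition. Define γ* as the supremum, over all n×n diagonal matrices D with diagonal entries in [c₂, c₂⁻¹], of the ℓ∞ operator norm ‖(n⁻¹X_{α₀}ᵀD X_{α₀})⁻¹‖_∞ (each such matrix being invertible under the stated conditions). Then ‖β̂ − β₀‖_∞ ≤ γ*·(‖n⁻¹X_{α₀}ᵀε‖_∞ + p_λ'(τ)). -/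
open scoped BigOperators Classical Matrix

lemma aux_mvt (f : ℝ → ℝ) (c₂ : ℝ) (hc₂ : 0 < c₂) (hc₂1 : c₂ ≤ 1)
    (hvar : ∀ θ : ℝ, c₂ ≤ deriv f θ ∧ deriv f θ ≤ c₂⁻¹) (x z : ℝ) :
    ∃ d, (c₂ ≤ d ∧ d ≤ c₂⁻¹) ∧ f z - f x = d * (z - x) := by
  have hd : Differentiable ℝ f := fun t =>
    differentiableAt_of_deriv_ne_zero (by have := (hvar t).1; linarith)
  rcases lt_trichotomy x z with h | h | h
  · obtain ⟨e, _, he⟩ := exists_deriv_eq_slope f h hd.continuous.continuousOn hd.differentiableOn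
    refine ⟨deriv f e, hvar e, ?_⟩
    rw [he, div_mul_cancel₀]
    linarith
  · subst h
    exact ⟨c₂, ⟨le_refl _, hc₂1.trans ((one_le_inv₀ hc₂).2 hc₂1)⟩, by simp⟩
  · obtain ⟨e, _, he⟩ := exists_deriv_eq_slope f h hd.continuous.continuousOn hd.differentiableOn
    refine ⟨deriv f e, hvar e, ?_⟩
    have h1 : x - z ≠ 0 := by linarith
    rw [he]
    field_simp
    ring

lemma aux_pen_s10 (pen : ℝ → ℝ) 
    (hmono : MonotoneOn pen (Set.Ici 0))
    (hconc : ConcaveOn ℝ (Set.Ici 0) pen)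
    (hpendiff : DifferentiableOn ℝ pen (Set.Ioi 0)) (s t : ℝ) (hs : 0 < s) (hst : s ≤ t) :
    0 ≤ deriv pen t ∧ deriv pen t ≤ deriv pen s := by
  constructor
  · have h1 : derivWithin pen (Set.Ioi 0) t = deriv pen t :=
      derivWithin_of_isOpen isOpen_Ioi (hs.trans_le hst)
    rw [← h1]
    exact (hmono.mono Set.Ioi_subset_Ici_self).derivWithin_nonneg
  · have h2 : ConcaveOn ℝ (Set.Ioi 0) pen :=
      hconc.subset Set.Ioi_subset_Ici_self (convex_Ioi 0)
    have h3 := h2.antitoneOn_deriv (fun x hx => (hpendiff x hx).differentiableAt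
      (isOpen_Ioi.mem_nhds hx))
    exact h3 hs (hs.trans_le hst) hst

/-- coercivity gives invertibility and an entrywise bound. -/
lemma aux_inv {ι : Type*} [Fintype ι] [DecidableEq ι] (A : Matrix ι ι ℝ) (m : ℝ) (hm : 0 < m)
    (hA : ∀ v : ι → ℝ, m * ∑ j, v j ^ 2 ≤ ∑ j, v j * (A *ᵥ v) j) :
    IsUnit A.det ∧ ∀ j k, |A⁻¹ j k| ≤ m⁻¹ := by
  have hdet : IsUnit A.det := by
    rw [isUnit_iff_ne_zero]
    intro h0
    obtain ⟨v, hv, hv0⟩ := Matrix.exists_mulVec_eq_zero_iff.2 h0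
    have h1 := hA v
    rw [hv0] at h1
    simp only [Pi.zero_apply, mul_zero, Finset.sum_const_zero] at h1
    apply hv
    funext j
    have h2 : v j ^ 2 ≤ ∑ j, v j ^ 2 :=
      Finset.single_le_sum (f := fun j => v j ^ 2) (fun i _ => sq_nonneg _) (Finset.mem_univ j)
    have h3 : v j ^ 2 ≤ 0 := by nlinarith
    have : v j = 0 := by nlinarith [sq_nonneg (v j), pow_eq_zero_iff (two_ne_zero) |>.1 (le_antisymm h3 (sq_nonneg _))]
    simpa using this
  refine ⟨hdet, fun j k => ?_⟩
  set w : ι → ℝ := fun i => A⁻¹ i k with hw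
  have hAw : ∀ i, (A *ᵥ w) i = if i = k then 1 else 0 := by
    intro i
    have : (A * A⁻¹) i k = (1 : Matrix ι ι ℝ) i k := by rw [Matrix.mul_nonsing_inv _ hdet]
    rw [Matrix.one_apply] at this
    rw [← this]; rfl
  have h1 := hA w
  simp only [hAw, mul_ite, mul_one, mul_zero, Finset.sum_ite_eq', Finset.mem_univ, if_true] at h1
  have h2 : ∀ j, w j ^ 2 ≤ ∑ j, w j ^ 2 := fun j =>
      Finset.single_le_sum (f := fun j => w j ^ 2) (fun i _ => sq_nonneg _) (Finset.mem_univ j)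
  have hj : m * w j ^ 2 ≤ w k := (mul_le_mul_of_nonneg_left (h2 j) hm.le).trans h1
  have hk : m * w k ^ 2 ≤ w k := (mul_le_mul_of_nonneg_left (h2 k) hm.le).trans h1
  have hmi : m * m⁻¹ = 1 := mul_inv_cancel₀ hm.ne'
  have hmp : 0 < m⁻¹ := inv_pos.2 hm
  have hwk : w k ≤ m⁻¹ := by
    by_contra hlt
    push Not at hlt
    have h5 : 0 < w k := hmp.trans hlt
    have h6 : 1 < m * w k := by rw [← hmi]; exact mul_lt_mul_of_pos_left hlt hm
    nlinarith
  have hsq : w j ^ 2 ≤ m⁻¹ ^ 2 := by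
    have : m * w j ^ 2 ≤ m * m⁻¹ ^ 2 := by
      have : m * m⁻¹ ^ 2 = m⁻¹ := by rw [pow_two, ← mul_assoc, hmi, one_mul]
      linarith
    exact le_of_mul_le_mul_left this hm
  exact abs_le_of_sq_le_sq hsq hmp.le

lemma aux_sum {p : ℕ} (s : Finset (Fin p)) (f : Fin p → ℝ) (hf : ∀ j, j ∉ s → f j = 0) :
    ∑ j, f j = ∑ k : ↥s, f k := by
  rw [Finset.sum_coe_sort s f]
  exact (Finset.sum_subset (Finset.subset_univ s) (fun j _ h => hf j h)).symm

/-- Deterministic core ((e048), (e008), (e009)) of the `L∞`-estimation bound in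
Theorem 2(b): if `β̂` has the true support `α₀`, all its nonzero coordinates have
magnitude at least `τ`, and it satisfies the stationarity equations
`n⁻¹x̃_jᵀ(y − b'(Xβ̂)) = p_λ'(|β̂_j|)·sgn(β̂_j)` on `α₀`, then
`‖β̂ − β₀‖_∞ ≤ γ*·(‖n⁻¹X_{α₀}ᵀε‖_∞ + p_λ'(τ))`, where `γ*` is the supremum of the
`ℓ∞` operator norms `‖(n⁻¹X_{α₀}ᵀDX_{α₀})⁻¹‖_∞` over diagonal matrices `D` with
diagonal entries in `[c₂, c₂⁻¹]`. -/
theorem linf_estimation_bound {n p : ℕ} (hn : 0 < n) (hp : 0 < p)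
    (X : Matrix (Fin n) (Fin p) ℝ)
    (b : ℝ → ℝ) (hb : ContDiff ℝ 2 b)
    (β₀ : Fin p → ℝ) (ε : Fin n → ℝ) (y : Fin n → ℝ)
    (hy : ∀ i, y i = deriv b (X.mulVec β₀ i) + ε i)
    -- bounded-variance condition
    (c₂ : ℝ) (hc₂ : 0 < c₂) (hc₂1 : c₂ ≤ 1)
    (hvar : ∀ θ : ℝ, c₂ ≤ deriv (deriv b) θ ∧ deriv (deriv b) θ ≤ c₂⁻¹)
    -- sparse-eigenvalue (robust spark) condition
    (c : ℝ) (hc : 0 < c) (κ : ℕ)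
    (hse : ∀ v : Fin p → ℝ, l0 v < κ →
      c * ∑ j, (v j) ^ 2 ≤ (1 / (n : ℝ)) * ∑ i, (X.mulVec v i) ^ 2)
    -- concave-penalty condition
    (pen : ℝ → ℝ) (lam c₃ : ℝ) (hc₃ : 0 < c₃) (hlam : 0 ≤ lam)
    (hmono : MonotoneOn pen (Set.Ici 0))
    (hconc : ConcaveOn ℝ (Set.Ici 0) pen)
    (hpen0 : pen 0 = 0)
    (hpendiff : DifferentiableOn ℝ pen (Set.Ioi 0))
    (hpend0 : HasDerivWithinAt pen (c₃ * lam) (Set.Ici 0) 0)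
    -- support and threshold assumptions on `β̂`
    (α₀ : Finset (Fin p)) (hα₀ : ∀ j, j ∈ α₀ ↔ β₀ j ≠ 0)
    (hcard : α₀.card < κ)
    (βh : Fin p → ℝ) (hsupp : ∀ j, βh j ≠ 0 ↔ j ∈ α₀)
    (τ : ℝ) (hτ : 0 < τ) (hthresh : ∀ j ∈ α₀, τ ≤ |βh j|)
    -- stationarity equations on the true support
    (hstat : ∀ j ∈ α₀,
      (1 / (n : ℝ)) * ∑ i, X i j * (y i - deriv b (X.mulVec βh i)) =
        deriv pen |βh j| * Real.sign (βh j))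
    -- the constant `γ*`
    (γstar : ℝ)
    (hγ : γstar = sSup {x : ℝ | ∃ d : Fin n → ℝ,
      (∀ i, c₂ ≤ d i ∧ d i ≤ c₂⁻¹) ∧
      x = ⨆ j : ↥α₀, ∑ k : ↥α₀,
        abs ((((1 / (n : ℝ)) •
            ((X.submatrix id (fun t : ↥α₀ => (t : Fin p)))ᵀ * Matrix.diagonal d *
              X.submatrix id (fun t : ↥α₀ => (t : Fin p))))⁻¹) j k)}) :
    ∀ j, |βh j - β₀ j| ≤
      γstar * ((⨆ j ∈ α₀, |(1 / (n : ℝ)) * ∑ i, X i j * ε i|) + deriv pen τ) := by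
  have hn' : (0 : ℝ) < 1 / (n : ℝ) := by positivity
  set S : Matrix (Fin n) ↥α₀ ℝ := X.submatrix id (fun t : ↥α₀ => (t : Fin p)) with hS
  have hmul : ∀ (d : Fin n → ℝ) (v : ↥α₀ → ℝ) (k : ↥α₀),
      (((1 / (n : ℝ)) • (Sᵀ * Matrix.diagonal d * S)) *ᵥ v) k
        = (1 / (n : ℝ)) * ∑ i, X i k * (d i * (S *ᵥ v) i) := by
    intro d v k
    rw [Matrix.smul_mulVec, ← Matrix.mulVec_mulVec, ← Matrix.mulVec_mulVec, Pi.smul_apply,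
      smul_eq_mul]
    congr 1
    simp only [Matrix.mulVec_diagonal, Matrix.mulVec, dotProduct, Matrix.transpose_apply]
    refine Finset.sum_congr rfl fun i _ => ?_
    rw [← dotProduct, ← Matrix.mulVec, Matrix.mulVec_diagonal]
    rfl
  have hSv : ∀ v : Fin p → ℝ, (∀ j, j ∉ α₀ → v j = 0) →
      ∀ i, (S *ᵥ (fun k : ↥α₀ => v k)) i = (X *ᵥ v) i := by
    intro v hv i
    simp only [Matrix.mulVec, dotProduct]
    rw [aux_sum α₀ _ (fun j hj => by rw [hv j hj, mul_zero])]
    rfl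
  have hcoer : ∀ d : Fin n → ℝ, (∀ i, c₂ ≤ d i ∧ d i ≤ c₂⁻¹) → ∀ v : ↥α₀ → ℝ,
      (c₂ * c) * ∑ j, v j ^ 2 ≤
        ∑ j, v j * (((1 / (n : ℝ)) • (Sᵀ * Matrix.diagonal d * S)) *ᵥ v) j := by
    intro d hd v
    set V : Fin p → ℝ := fun j => if h : j ∈ α₀ then v ⟨j, h⟩ else 0 with hV
    have hV0 : ∀ j, j ∉ α₀ → V j = 0 := fun j hj => by simp [hV, hj]
    have hVv : (fun k : ↥α₀ => V k) = v := by funext k; simp [hV]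
    have hVv' : ∀ k : ↥α₀, V k = v k := fun k => congrFun hVv k
    have hl : l0 V < κ := by
      refine lt_of_le_of_lt (Finset.card_le_card ?_) hcard
      intro j hj
      by_contra h
      exact (Finset.mem_filter.1 hj).2 (hV0 j h)
    have h1 := hse V hl
    have h2 := hSv V hV0
    rw [hVv] at h2
    rw [aux_sum α₀ _ (fun j hj => by rw [hV0 j hj]; simp)] at h1
    simp only [hVv'] at h1
    have h3 : ∑ j, v j * (((1 / (n : ℝ)) • (Sᵀ * Matrix.diagonal d * S)) *ᵥ v) j
        = (1 / (n : ℝ)) * ∑ i, d i * ((S *ᵥ v) i) ^ 2 := by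
      simp only [hmul]
      simp only [Finset.mul_sum]
      rw [Finset.sum_comm]
      refine Finset.sum_congr rfl fun i _ => ?_
      have h4 : (S *ᵥ v) i = ∑ k : ↥α₀, X i k * v k := rfl
      calc ∑ k : ↥α₀, v k * (1 / (n : ℝ) * (X i k * (d i * (S *ᵥ v) i)))
          = ∑ k : ↥α₀, (X i k * v k) * (1 / (n : ℝ) * (d i * (S *ᵥ v) i)) :=
            Finset.sum_congr rfl fun k _ => by ring
        _ = (S *ᵥ v) i * (1 / (n : ℝ) * (d i * (S *ᵥ v) i)) := by
            rw [← Finset.sum_mul, ← h4]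
        _ = _ := by ring
    rw [h3]
    have h5 : c₂ * ∑ i, (X *ᵥ V) i ^ 2 ≤ ∑ i, d i * ((S *ᵥ v) i) ^ 2 := by
      rw [Finset.mul_sum]
      refine Finset.sum_le_sum fun i _ => ?_
      rw [h2]
      exact mul_le_mul_of_nonneg_right (hd i).1 (sq_nonneg _)
    calc c₂ * c * ∑ j, v j ^ 2 = c₂ * (c * ∑ j, v j ^ 2) := by ring
      _ ≤ c₂ * ((1 / (n : ℝ)) * ∑ i, (X *ᵥ V) i ^ 2) := mul_le_mul_of_nonneg_left h1 hc₂.le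
      _ = (1 / (n : ℝ)) * (c₂ * ∑ i, (X *ᵥ V) i ^ 2) := by ring
      _ ≤ _ := mul_le_mul_of_nonneg_left h5 hn'.le
  have hm : 0 < c₂ * c := mul_pos hc₂ hc
  have hinv := fun d hd => aux_inv _ _ hm (hcoer d hd)
  have hγ0 : 0 ≤ γstar := by
    rw [hγ]
    refine Real.sSup_nonneg ?_
    rintro x ⟨d, hd, rfl⟩
    exact Real.iSup_nonneg fun j => Finset.sum_nonneg fun k _ => abs_nonneg _
  have hrow : ∀ d : Fin n → ℝ, (∀ i, c₂ ≤ d i ∧ d i ≤ c₂⁻¹) → ∀ j : ↥α₀,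
      ∑ k : ↥α₀, |(((1 / (n : ℝ)) • (Sᵀ * Matrix.diagonal d * S))⁻¹) j k| ≤ γstar := by
    intro d hd j
    have hb2 : BddAbove {x : ℝ | ∃ d : Fin n → ℝ, (∀ i, c₂ ≤ d i ∧ d i ≤ c₂⁻¹) ∧
        x = ⨆ j : ↥α₀, ∑ k : ↥α₀,
          |(((1 / (n : ℝ)) • (Sᵀ * Matrix.diagonal d * S))⁻¹) j k|} := by
      refine ⟨∑ k : ↥α₀, (c₂ * c)⁻¹, ?_⟩
      rintro x ⟨d, hd, rfl⟩
      haveI : Nonempty ↥α₀ := ⟨j⟩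
      exact ciSup_le fun j => Finset.sum_le_sum fun k _ => (hinv d hd).2 j k
    rw [hγ]
    refine le_trans ?_ (le_csSup hb2 ⟨d, hd, rfl⟩)
    exact le_ciSup (f := fun j : ↥α₀ => ∑ k : ↥α₀,
          |(((1 / (n : ℝ)) • (Sᵀ * Matrix.diagonal d * S))⁻¹) j k|)
      (Set.finite_range _).bddAbove j
  have hE0 : 0 ≤ ⨆ j ∈ α₀, |(1 / (n : ℝ)) * ∑ i, X i j * ε i| :=
    Real.iSup_nonneg fun j => Real.iSup_nonneg fun _ => abs_nonneg _
  have hEk : ∀ k ∈ α₀, |(1 / (n : ℝ)) * ∑ i, X i k * ε i| ≤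
      ⨆ j ∈ α₀, |(1 / (n : ℝ)) * ∑ i, X i j * ε i| := by
    intro k hk
    have h1 := le_ciSup (f := fun j => ⨆ (_ : j ∈ α₀), |(1 / (n : ℝ)) * ∑ i, X i j * ε i|)
      (Set.finite_range _).bddAbove k
    refine le_trans (le_of_eq ?_) h1
    haveI : Nonempty (k ∈ α₀) := ⟨hk⟩
    exact (ciSup_const).symm
  have hτ0 := (aux_pen_s10 pen hmono hconc hpendiff τ τ hτ le_rfl).1
  have hB0 := add_nonneg hE0 hτ0
  intro j
  by_cases hj : j ∈ α₀
  swap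
  · have h1 : βh j = 0 := by
      by_contra h
      exact hj ((hsupp j).1 h)
    have h2 : β₀ j = 0 := by
      by_contra h
      exact hj ((hα₀ j).2 h)
    rw [h1, h2, sub_zero, abs_zero]
    exact mul_nonneg hγ0 hB0
  choose d hd hdeq using fun i : Fin n =>
    aux_mvt (deriv b) c₂ hc₂ hc₂1 hvar ((X *ᵥ β₀) i) ((X *ᵥ βh) i)
  set A := (1 / (n : ℝ)) • (Sᵀ * Matrix.diagonal d * S) with hA
  set δ : ↥α₀ → ℝ := fun k => (βh - β₀) k with hδ
  have hSδ : ∀ i, (S *ᵥ δ) i = (X *ᵥ βh) i - (X *ᵥ β₀) i := by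
    intro i
    rw [hδ, hSv (βh - β₀), Matrix.mulVec_sub]
    · rfl
    · intro j hj
      have h1 : βh j = 0 := by
        by_contra h
        exact hj ((hsupp j).1 h)
      have h2 : β₀ j = 0 := by
        by_contra h
        exact hj ((hα₀ j).2 h)
      simp [h1, h2]
  have hAδ : ∀ k, (A *ᵥ δ) k = (1 / (n : ℝ)) * ∑ i, X i k * ε i
      - deriv pen |βh k| * Real.sign (βh k) := by
    intro k
    rw [hmul, ← hstat k k.2, ← mul_sub, ← Finset.sum_sub_distrib]
    congr 1
    refine Finset.sum_congr rfl fun i _ => ?_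
    rw [hSδ, ← hdeq, hy]
    ring
  have hAb : ∀ k, |(A *ᵥ δ) k| ≤
      (⨆ j ∈ α₀, |(1 / (n : ℝ)) * ∑ i, X i j * ε i|) + deriv pen τ := by
    intro k
    rw [hAδ]
    refine (abs_sub _ _).trans (add_le_add (hEk k k.2) ?_)
    obtain ⟨h1, h2⟩ := aux_pen_s10 pen hmono hconc hpendiff τ _ hτ (hthresh k k.2)
    rw [abs_mul, abs_of_nonneg h1]
    have h3 : |Real.sign (βh k)| ≤ 1 := by
      rcases Real.sign_apply_eq (βh k) with h | h | h <;> simp [h]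
    calc _ ≤ deriv pen |βh k| * 1 := mul_le_mul_of_nonneg_left h3 h1
      _ ≤ _ := by rw [mul_one]; exact h2
  have hδA : δ = A⁻¹ *ᵥ (A *ᵥ δ) := by
    rw [Matrix.mulVec_mulVec, Matrix.nonsing_inv_mul _ (hinv d hd).1, Matrix.one_mulVec]
  have hfin : βh j - β₀ j = ∑ k : ↥α₀, A⁻¹ ⟨j, hj⟩ k * (A *ᵥ δ) k := congrFun hδA ⟨j, hj⟩
  rw [hfin]
  refine (Finset.abs_sum_le_sum_abs _ _).trans ?_
  refine le_trans ?_ (mul_le_mul_of_nonneg_right (hrow d hd ⟨j, hj⟩) hB0)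
  rw [Finset.sum_mul]
  refine Finset.sum_le_sum fun k _ => ?_
  rw [abs_mul]
  exact mul_le_mul_of_nonneg_left (hAb k) (abs_nonneg _)
end

section
/- Assume b : ℝ → ℝ is twice continuously differentiable and convex (b'' ≥ 0), and assume the penalty p_λ : [0,∞) → ℝ is increasing with p_λ(0) = 0 and p_λ(τ) > 0. Let β₀ ∈ B_{τ,κ} and let β̂ be a global minimizer of Q_n over B_{τ,κ}. Then the model size of β̂ satisfies ‖β̂‖₀ · p_λ(τ) ≤ Σ_{j=1}^p p_λ(|β₀_j|) + n⁻¹·εᵀX(β̂ − β₀). -/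
open scoped BigOperators Classical

/-- Deterministic bound (e077) underlying the sign-risk inequality of Theorem 3(a):
for convex `b` and an increasing penalty with `p_λ(0) = 0` and `p_λ(τ) > 0`, the model
size of the global minimizer `β̂` over `B_{τ,κ}` satisfies
`‖β̂‖₀·p_λ(τ) ≤ Σⱼ p_λ(|β₀_j|) + n⁻¹εᵀX(β̂ − β₀)`. -/
theorem model_size_bound {n p : ℕ} (hn : 0 < n) (hp : 0 < p)
    (X : Matrix (Fin n) (Fin p) ℝ)
    (b : ℝ → ℝ) (hb : ContDiff ℝ 2 b)
    (hconv : ∀ θ : ℝ, 0 ≤ deriv (deriv b) θ)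
    (β₀ : Fin p → ℝ) (ε : Fin n → ℝ) (y : Fin n → ℝ)
    (hy : ∀ i, y i = deriv b (X.mulVec β₀ i) + ε i)
    (pen : ℝ → ℝ) (hmono : MonotoneOn pen (Set.Ici 0)) (hpen0 : pen 0 = 0)
    (τ : ℝ) (hτ : 0 < τ) (hpenτ : 0 < pen τ) (κ : ℕ)
    (hβ₀ : β₀ ∈ Bset τ κ)
    (βh : Fin p → ℝ) (hβh : βh ∈ Bset τ κ)
    (hmin : ∀ β ∈ Bset τ κ, Qn X y b pen βh ≤ Qn X y b pen β) :
    (l0 βh : ℝ) * pen τ ≤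
      (∑ j, pen |β₀ j|) + (1 / (n : ℝ)) * ∑ i, ε i * X.mulVec (βh - β₀) i := by
  have hd : Differentiable ℝ b := hb.differentiable (by norm_num)
  have hd' : Differentiable ℝ (deriv b) :=
    ((contDiff_succ_iff_deriv (n := 1)).1 (by simpa [one_add_one_eq_two] using hb)).2.2.differentiable
      (by norm_num)
  have hc : ConvexOn ℝ Set.univ b :=
    convexOn_univ_of_deriv2_nonneg hd hd' (by simpa using hconv)
  have tang : ∀ u v : ℝ, b u + deriv b u * (v - u) ≤ b v := by
    intro u v
    rcases lt_trichotomy u v with h | h | h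
    · have := hc.le_slope_of_hasDerivAt (Set.mem_univ u) (Set.mem_univ v) h (hd u).hasDerivAt
      rw [slope_def_field, le_div_iff₀ (by linarith)] at this
      linarith
    · subst h; simp
    · have := hc.slope_le_of_hasDerivAt (Set.mem_univ v) (Set.mem_univ u) h (hd u).hasDerivAt
      rw [slope_def_field, div_le_iff₀ (by linarith)] at this
      linarith
  have hQ := hmin β₀ hβ₀
  unfold Qn at hQ
  have h1 : (l0 βh : ℝ) * pen τ ≤ ∑ j, pen |βh j| := by
    unfold l0
    rw [← nsmul_eq_mul, ← Finset.sum_const, Finset.sum_filter]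
    refine Finset.sum_le_sum fun j _ => ?_
    split_ifs with h
    · exact hmono (Set.mem_Ici.2 hτ.le) (Set.mem_Ici.2 (abs_nonneg _)) ((hβh.2 j).resolve_left h)
    · simp only [ne_eq, not_not] at h
      simp [h, hpen0]
  have h2 : (∑ i, y i * X.mulVec βh i - ∑ i, b (X.mulVec βh i))
      - (∑ i, y i * X.mulVec β₀ i - ∑ i, b (X.mulVec β₀ i))
      ≤ ∑ i, ε i * X.mulVec (βh - β₀) i := by
    rw [← Finset.sum_sub_distrib, ← Finset.sum_sub_distrib, ← Finset.sum_sub_distrib]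
    refine Finset.sum_le_sum fun i _ => ?_
    have := tang (X.mulVec β₀ i) (X.mulVec βh i)
    rw [hy i, Matrix.mulVec_sub, Pi.sub_apply]
    linarith
  have h3 := mul_le_mul_of_nonneg_left h2 (by positivity : (0 : ℝ) ≤ 1 / (n : ℝ))
  linarith
end

section
/- Let c₀ > 0. For each n, let p = p(n) > n be an integer, let Σ = Σ(n) be a p×p real symmetric positive-definite matrix with smallest eigenvalue at least c₀, and let X = X(n) be a random n×p matrix whose rows are independent and identically distributed according to the multivariate Gaussian distribution N(0, Σ) on ℝ^p. Assume log p(n) = o(n) as n → ∞. Then there exist positive constants c and c̃ (not depending on n) such that P( for every subset α ⊆ {1,…,p} with |α| < c̃·n/(log p), the smallest singular value of the submatrix n^{−1/2}X_α is at least c ) → 1 as n → ∞; equivalently, the robust spark κ_c of X satisfies κ_c ≥ c̃·n/(log p) with asymptotic probability one. -/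
open scoped BigOperators
open MeasureTheory Filter

lemma rs_lintegral_gauss (s lam : ℝ) (hs : 0 < s) (h : 0 < 1 - 2 * lam * s) :
    ∫⁻ y, ENNReal.ofReal (Real.exp (lam * y ^ 2)) ∂(ProbabilityTheory.gaussianReal 0 s.toNNReal)
      = ENNReal.ofReal (Real.sqrt (1 / (1 - 2 * lam * s))) := by
  have hs' : s.toNNReal ≠ 0 := by simpa using hs
  rw [ProbabilityTheory.gaussianReal_of_var_ne_zero _ hs',
    lintegral_withDensity_eq_lintegral_mul _ (ProbabilityTheory.measurable_gaussianPDF _ _)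
      (by fun_prop)]
  have hb : 0 < (1 - 2 * lam * s) / (2 * s) := by positivity
  have : ∀ y : ℝ, (ProbabilityTheory.gaussianPDF 0 s.toNNReal *
      fun y => ENNReal.ofReal (Real.exp (lam * y ^ 2))) y =
      ENNReal.ofReal ((Real.sqrt (2 * Real.pi * s))⁻¹ *
        Real.exp (-((1 - 2 * lam * s) / (2 * s)) * y ^ 2)) := by
    intro y
    rw [Pi.mul_apply, ProbabilityTheory.gaussianPDF, ProbabilityTheory.gaussianPDFReal,
      ← ENNReal.ofReal_mul (by positivity), Real.coe_toNNReal _ hs.le, mul_assoc, ← Real.exp_add]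
    congr 3
    field_simp
    ring
  simp_rw [this]
  rw [← ofReal_integral_eq_lintegral_ofReal ((integrable_exp_neg_mul_sq hb).const_mul _)
    (Filter.Eventually.of_forall fun y => by positivity), integral_const_mul, integral_gaussian,
    ← Real.sqrt_inv, ← Real.sqrt_mul (by positivity)]
  congr 2
  field_simp

lemma rs_chernoff {E : Type*} [MeasurableSpace E] (μ : Measure E) [IsProbabilityMeasure μ]
    (n : ℕ) (g : E → ℝ) (hg : Measurable g) (T : ℝ) (I : ENNReal)
    (hI : ∫⁻ y, ENNReal.ofReal (Real.exp (g y)) ∂μ ≤ I) :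
    Measure.pi (fun _ : Fin n => μ) {x | T ≤ ∑ i, g (x i)} ≤ I ^ n * ENNReal.ofReal (Real.exp (-T)) := by
  have h1 : ∫⁻ x, ∏ i, ENNReal.ofReal (Real.exp (g (x i))) ∂(Measure.pi (fun _ : Fin n => μ))
      ≤ I ^ n := by
    rw [ProbabilityTheory.lintegral_prod_eq_prod_lintegral_of_indepFun Finset.univ
      (fun i (x : Fin n → E) => ENNReal.ofReal (Real.exp (g (x i))))
      (ProbabilityTheory.iIndepFun_pi (X := fun _ y => ENNReal.ofReal (Real.exp (g y)))
        (fun i => by fun_prop)) (fun i => by fun_prop)]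
    have : ∀ i : Fin n, ∫⁻ x, ENNReal.ofReal (Real.exp (g (x i))) ∂(Measure.pi (fun _ : Fin n => μ))
        = ∫⁻ y, ENNReal.ofReal (Real.exp (g y)) ∂μ := fun i =>
      (measurePreserving_eval (fun _ : Fin n => μ) i).lintegral_comp
        (f := fun y => ENNReal.ofReal (Real.exp (g y))) (by fun_prop)
    simp only [this, Finset.prod_const, Finset.card_univ, Fintype.card_fin]
    gcongr
  have h2 := mul_meas_ge_le_lintegral (μ := Measure.pi (fun _ : Fin n => μ))
    (f := fun x => ∏ i, ENNReal.ofReal (Real.exp (g (x i)))) (by fun_prop)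
    (ENNReal.ofReal (Real.exp T))
  have h3 : {x : Fin n → E | T ≤ ∑ i, g (x i)} ⊆ {x | ENNReal.ofReal (Real.exp T) ≤
      ∏ i, ENNReal.ofReal (Real.exp (g (x i)))} := by
    intro x hx
    simp only [Set.mem_ofPred_eq] at hx ⊢
    rw [← ENNReal.ofReal_prod_of_nonneg (fun i _ => (Real.exp_pos _).le), ← Real.exp_sum]
    exact ENNReal.ofReal_le_ofReal (Real.exp_le_exp.2 hx)
  have h4 := (mul_le_mul_right (measure_mono h3) _).trans (h2.trans h1)
  rw [Real.exp_neg, ENNReal.ofReal_inv_of_pos (Real.exp_pos _), ← div_eq_mul_inv]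
  rw [ENNReal.le_div_iff_mul_le (by simp [Real.exp_pos]) (by simp), mul_comm]
  exact h4

lemma rs_row {p : ℕ} (μ : Measure (Fin p → ℝ)) [IsProbabilityMeasure μ] (w : Fin p → ℝ) (s : ℝ)
    (hw : Measure.map (fun x : Fin p → ℝ => ∑ j, w j * x j) μ =
        ProbabilityTheory.gaussianReal 0 (Real.toNNReal s)) (n : ℕ) (lam T : ℝ)
    (hs : 0 < s) (h : 0 < 1 - 2 * lam * s) :
    Measure.pi (fun _ : Fin n => μ) {x | T ≤ lam * ∑ i, (∑ j, x i j * w j) ^ 2} ≤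
      ENNReal.ofReal (Real.sqrt (1 / (1 - 2 * lam * s)) ^ n * Real.exp (-T)) := by
  have hI := rs_lintegral_gauss s lam hs h
  rw [← hw, lintegral_map (by fun_prop) (by fun_prop)] at hI
  have := rs_chernoff μ n (fun x => lam * (∑ j, w j * x j) ^ 2) (by fun_prop) T _ hI.le
  rw [ENNReal.ofReal_mul (by positivity), ENNReal.ofReal_pow (by positivity)]
  simpa only [Finset.mul_sum, mul_comm (w _)] using this

lemma rs_small {p : ℕ} (μ : Measure (Fin p → ℝ)) [IsProbabilityMeasure μ] (w : Fin p → ℝ) (s : ℝ)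
    (hw : Measure.map (fun x : Fin p → ℝ => ∑ j, w j * x j) μ =
        ProbabilityTheory.gaussianReal 0 (Real.toNNReal s)) (n : ℕ) (hs : 1 / 4 ≤ s) :
    Measure.pi (fun _ : Fin n => μ) {x | ∑ i, (∑ j, x i j * w j) ^ 2 ≤ n / 100} ≤
      ENNReal.ofReal ((1 / 2) ^ n) := by
  have := rs_row μ w s hw n (-100) (-n) (by linarith) (by linarith)
  refine (measure_mono ?_).trans (this.trans (ENNReal.ofReal_le_ofReal ?_))
  · intro x hx
    simp only [Set.mem_ofPred_eq] at hx ⊢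
    linarith
  · rw [neg_neg, show (n : ℝ) = n * 1 by ring, Real.exp_nat_mul, ← mul_pow]
    refine pow_le_pow_left₀ (by positivity) ?_ n
    have h1 : Real.sqrt (1 / (1 - 2 * (-100) * s)) ≤ 1 / 7 := by
      apply Real.sqrt_le_iff.2 ⟨by norm_num, ?_⟩
      rw [div_le_iff₀ (by linarith)]
      linarith
    have := Real.exp_one_lt_d9
    nlinarith [Real.exp_pos 1]

lemma rs_large {p : ℕ} (μ : Measure (Fin p → ℝ)) [IsProbabilityMeasure μ] (w : Fin p → ℝ)
    (hw : Measure.map (fun x : Fin p → ℝ => ∑ j, w j * x j) μ =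
        ProbabilityTheory.gaussianReal 0 (Real.toNNReal 1)) (n : ℕ) :
    Measure.pi (fun _ : Fin n => μ) {x | 9 * n ≤ ∑ i, (∑ j, x i j * w j) ^ 2} ≤
      ENNReal.ofReal ((1 / 2) ^ n) := by
  have := rs_row μ w 1 hw n (1 / 4) (n * (9 / 4)) (by linarith) (by norm_num)
  refine (measure_mono ?_).trans (this.trans (ENNReal.ofReal_le_ofReal ?_))
  · intro x hx
    simp only [Set.mem_ofPred_eq] at hx ⊢
    linarith
  · rw [← mul_neg, Real.exp_nat_mul, ← mul_pow]
    refine pow_le_pow_left₀ (by positivity) ?_ n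
    have h1 : Real.sqrt (1 / (1 - 2 * (1 / 4) * 1)) ≤ 3 / 2 := by
      apply Real.sqrt_le_iff.2 ⟨by norm_num, ?_⟩
      norm_num
    have h2 : Real.exp (-(9 / 4)) ≤ 1 / 3 := by
      rw [Real.exp_neg, inv_le_comm₀ (Real.exp_pos _) (by norm_num)]
      have := Real.add_one_le_exp (9 / 4 : ℝ)
      norm_num at this ⊢
      linarith
    have := Real.exp_pos (-(9 / 4))
    nlinarith

open scoped MatrixOrder in
lemma rs_basis {p : ℕ} (S : Fin p → Fin p → ℝ) (hsymm : ∀ j k, S j k = S k j)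
    (hpos : ∀ v : Fin p → ℝ, v ≠ 0 → 0 < ∑ j, ∑ k, v j * S j k * v k) (α : Finset (Fin p)) :
    ∃ e : α → Fin p → ℝ,
      (∀ a : α → ℝ, ∑ j, ∑ k, (∑ l, a l * e l j) * S j k * (∑ l, a l * e l k) = ∑ l, a l ^ 2) ∧
      ∀ v : Fin p → ℝ, (∀ j, j ∉ α → v j = 0) → ∃ a : α → ℝ, ∀ j, v j = ∑ l, a l * e l j := by
  have hM : (Matrix.of S).PosDef := by
    refine Matrix.PosDef.of_dotProduct_mulVec_pos (by ext i j; simp [hsymm i j]) ?_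
    intro x hx
    have := hpos x hx
    simpa [dotProduct, Matrix.mulVec, Finset.mul_sum, mul_assoc] using this
  have hA : ((Matrix.of S).submatrix (fun i : α => (i : Fin p)) (fun i : α => (i : Fin p))).PosDef :=
    hM.submatrix Subtype.val_injective
  obtain ⟨B, hB⟩ := CStarAlgebra.nonneg_iff_eq_star_mul_self.1
    (Matrix.nonneg_iff_posSemidef.2 hA.posSemidef)
  have hdet : IsUnit B.det := by
    have := hA.det_pos
    rw [hB, Matrix.det_mul] at this
    exact isUnit_iff_ne_zero.2 (right_ne_zero_of_mul this.ne')
  let e : α → Fin p → ℝ := fun l j => if h : j ∈ α then B⁻¹ ⟨j, h⟩ l else 0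
  have he : ∀ (a : α → ℝ) (j : α), ∑ l, a l * e l j = (B⁻¹.mulVec a) j := by
    intro a j
    simp [e, Matrix.mulVec, dotProduct, mul_comm]
  have he0 : ∀ (a : α → ℝ) (j : Fin p), j ∉ α → ∑ l, a l * e l j = 0 := by
    intro a j hj
    simp [e, hj]
  refine ⟨e, ?_, ?_⟩
  · intro a
    have key : ∀ f : Fin p → ℝ, (∀ j, j ∉ α → f j = 0) → ∑ j, f j = ∑ j : α, f j := by
      intro f hf
      rw [Finset.sum_coe_sort α f]
      exact (Finset.sum_subset (Finset.subset_univ α) fun j _ hj => hf j hj).symm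
    rw [key _ (fun j hj => by simp only [he0 a j hj, zero_mul, Finset.sum_const_zero])]
    have : ∀ j : α, ∑ k, (∑ l, a l * e l j) * S j k * (∑ l, a l * e l k)
        = ∑ k : α, (B⁻¹.mulVec a) j * S j k * (B⁻¹.mulVec a) k := by
      intro j
      rw [key _ (fun k hk => by simp only [he0 a k hk, mul_zero])]
      simp only [he]
    simp only [this]
    have h1 : ∀ u : α → ℝ, ∑ j : α, ∑ k : α, u j * S j k * u k = ∑ j, (B.mulVec u) j ^ 2 := by
      intro u
      have h2 : u ⬝ᵥ (((Matrix.of S).submatrix (fun i : α => (i : Fin p)) (fun i : α => (i : Fin p))).mulVec u)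
        = (B.mulVec u) ⬝ᵥ (B.mulVec u) := by
        rw [hB, ← Matrix.mulVec_mulVec, Matrix.dotProduct_mulVec, Matrix.star_eq_conjTranspose,
          Matrix.conjTranspose_eq_transpose_of_trivial, Matrix.vecMul_transpose]
      simpa [dotProduct, Matrix.mulVec, Finset.mul_sum, mul_assoc, sq] using h2
    rw [h1, Matrix.mulVec_mulVec, Matrix.mul_nonsing_inv _ hdet, Matrix.one_mulVec]
  · intro v hv
    refine ⟨B.mulVec (fun j => v j), fun j => ?_⟩
    by_cases hj : j ∈ α
    · rw [he _ ⟨j, hj⟩, Matrix.mulVec_mulVec, Matrix.nonsing_inv_mul _ hdet, Matrix.one_mulVec]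
    · rw [hv j hj, he0 _ j hj]

/-- deterministic net argument -/
lemma rs_net {ι E : Type*} [Fintype ι] [NormedAddCommGroup E] [NormedSpace ℝ E] (n : ℕ) (hn : 0 < n)
    (hι : Fintype.card ι ≤ n) (x : ι → E) (r : ℝ) (hr : 0 ≤ r) (hx : ∀ l, ‖x l‖ ≤ 3 * r)
    (hnet : ∀ m : ι → Finset.Icc (-(60 * n : ℤ)) (60 * n),
      1 / 4 ≤ ∑ l, ((m l : ℤ) / (60 * n) : ℝ) ^ 2 →
        r / 10 ≤ ‖∑ l, ((m l : ℤ) / (60 * n) : ℝ) • x l‖) (a : ι → ℝ) (ha : ∑ l, a l ^ 2 = 1) :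
    r / 20 ≤ ‖∑ l, a l • x l‖ := by
  have hn' : (1 : ℝ) ≤ n := by exact_mod_cast hn
  have hM : (0 : ℝ) < 60 * n := by positivity
  have ha1 : ∀ l, |a l| ≤ 1 := by
    intro l
    rw [← sq_le_one_iff_abs_le_one, ← ha]
    exact Finset.single_le_sum (f := fun l => a l ^ 2) (fun i _ => sq_nonneg _) (Finset.mem_univ l)
  let m : ι → Finset.Icc (-(60 * n : ℤ)) (60 * n) := fun l => ⟨⌊a l * (60 * n)⌋, by
    have := abs_le.1 (ha1 l)
    rw [Finset.mem_Icc]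
    constructor
    · rw [Int.le_floor]; push_cast; nlinarith
    · have h := Int.floor_le (a l * (60 * n))
      have : (⌊a l * (60 * n)⌋ : ℝ) ≤ ((60 * n : ℤ) : ℝ) := by push_cast; nlinarith
      exact_mod_cast this⟩
  have hm : ∀ l, |a l - ((m l : ℤ) / (60 * n) : ℝ)| ≤ 1 / (60 * n) := by
    intro l
    have h1 := Int.floor_le (a l * (60 * n))
    have h2 := (Int.lt_floor_add_one (a l * (60 * n))).le
    have : a l - ((m l : ℤ) / (60 * n) : ℝ) = (a l * (60 * n) - ⌊a l * (60 * n)⌋) / (60 * n) := by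
      simp only [m]; field_simp
    rw [this, abs_div, abs_of_pos hM]
    gcongr
    rw [abs_le]; constructor <;> linarith
  have hc : (Fintype.card ι : ℝ) ≤ n := by exact_mod_cast hι
  have h4 : 1 / 4 ≤ ∑ l, ((m l : ℤ) / (60 * n) : ℝ) ^ 2 := by
    have h5 : ∑ l, (a l ^ 2 - 2 * (1 / (60 * n))) ≤ ∑ l, ((m l : ℤ) / (60 * n) : ℝ) ^ 2 := by
      refine Finset.sum_le_sum fun l _ => ?_
      set b := ((m l : ℤ) / (60 * n) : ℝ)
      have h6 : |a l * (a l - b)| ≤ 1 * (1 / (60 * n)) := by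
        rw [abs_mul]
        exact mul_le_mul (ha1 l) (hm l) (abs_nonneg _) zero_le_one
      have := (abs_le.1 h6).2
      nlinarith [sq_nonneg (a l - b)]
    rw [Finset.sum_sub_distrib, ha, Finset.sum_const, Finset.card_univ, nsmul_eq_mul] at h5
    have : (Fintype.card ι : ℝ) * (2 * (1 / (60 * n))) ≤ n * (2 * (1 / (60 * n))) := by gcongr
    have h7 : (n : ℝ) * (2 * (1 / (60 * n))) = 1 / 30 := by field_simp; norm_num
    linarith
  have h8 := hnet m h4
  have h9 : ‖∑ l, ((m l : ℤ) / (60 * n) : ℝ) • x l‖ ≤ ‖∑ l, a l • x l‖ +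
      ‖∑ l, (a l - ((m l : ℤ) / (60 * n) : ℝ)) • x l‖ := by
    have : ∑ l, ((m l : ℤ) / (60 * n) : ℝ) • x l = ∑ l, a l • x l -
      ∑ l, (a l - ((m l : ℤ) / (60 * n) : ℝ)) • x l := by
      simp [sub_smul]
    rw [this]; exact norm_sub_le _ _
  have h10 : ‖∑ l, (a l - ((m l : ℤ) / (60 * n) : ℝ)) • x l‖ ≤ ∑ l : ι, 1 / (60 * n) * (3 * r) := by
    refine norm_sum_le_of_le _ fun l _ => ?_
    rw [norm_smul]
    exact mul_le_mul (hm l) (hx l) (norm_nonneg _) (by positivity)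
  rw [Finset.sum_const, Finset.card_univ, nsmul_eq_mul] at h10
  have h11 : (Fintype.card ι : ℝ) * (1 / (60 * n) * (3 * r)) ≤ n * (1 / (60 * n) * (3 * r)) := by gcongr
  have h12 : (n : ℝ) * (1 / (60 * n) * (3 * r)) = r / 20 := by field_simp; ring
  linarith

lemma rs_alpha {p : ℕ} (S : Fin p → Fin p → ℝ) (hsymm : ∀ j k, S j k = S k j)
    (hpos : ∀ v : Fin p → ℝ, v ≠ 0 → 0 < ∑ j, ∑ k, v j * S j k * v k)
    (μ : Measure (Fin p → ℝ)) [IsProbabilityMeasure μ]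
    (hgauss : ∀ v : Fin p → ℝ,
      Measure.map (fun x : Fin p → ℝ => ∑ j, v j * x j) μ =
        ProbabilityTheory.gaussianReal 0
          (Real.toNNReal (∑ j, ∑ k, v j * S j k * v k)))
    (n : ℕ) (hn : 0 < n) (α : Finset (Fin p)) (hα : α.card ≤ n) :
    Measure.pi (fun _ : Fin n => μ) {x | ¬ ∀ v : Fin p → ℝ, (∀ j, j ∉ α → v j = 0) →
      n / 400 * (∑ j, ∑ k, v j * S j k * v k) ≤ ∑ i, (∑ j, x i j * v j) ^ 2} ≤
    ENNReal.ofReal ((n + (120 * n + 1) ^ α.card) * (1 / 2) ^ n) := by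
  classical
  obtain ⟨e, he1, he2⟩ := rs_basis S hsymm hpos α
  let N := Measure.pi (fun _ : Fin n => μ)
  let G := α → Finset.Icc (-(60 * n : ℤ)) (60 * n)
  let w : G → Fin p → ℝ := fun m j => ∑ l, ((m l : ℤ) / (60 * n) : ℝ) * e l j
  let A : α → Set (Fin n → Fin p → ℝ) := fun l => {x | 9 * n ≤ ∑ i, (∑ j, x i j * e l j) ^ 2}
  let C : G → Set (Fin n → Fin p → ℝ) := fun m => {x |
    1 / 4 ≤ ∑ l, ((m l : ℤ) / (60 * n) : ℝ) ^ 2 ∧ ∑ i, (∑ j, x i j * w m j) ^ 2 ≤ n / 100}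
  have hA : ∀ l, N (A l) ≤ ENNReal.ofReal ((1 / 2) ^ n) := by
    intro l
    apply rs_large
    rw [hgauss]
    have := he1 (Pi.single l 1)
    simp only [Pi.single_apply, ite_mul, one_mul, zero_mul, Finset.sum_ite_eq', Finset.mem_univ,
      if_true, ite_pow, one_pow] at this
    rw [this]
    simp
  have hC : ∀ m, N (C m) ≤ ENNReal.ofReal ((1 / 2) ^ n) := by
    intro m
    by_cases h : 1 / 4 ≤ ∑ l, ((m l : ℤ) / (60 * n) : ℝ) ^ 2
    · refine (measure_mono ?_).trans (rs_small μ (w m) _ (hgauss _) n ?_)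
      · intro x hx; exact hx.2
      · rw [he1]; exact h
    · have : C m = ∅ := by
        ext x
        simp only [C, h, false_and]
        simp
      rw [this]; simp
  have hsub : {x : Fin n → Fin p → ℝ | ¬ ∀ v : Fin p → ℝ, (∀ j, j ∉ α → v j = 0) →
      n / 400 * (∑ j, ∑ k, v j * S j k * v k) ≤ ∑ i, (∑ j, x i j * v j) ^ 2} ⊆
      (⋃ l, A l) ∪ ⋃ m, C m := by
    intro x hx
    by_contra hcon
    apply hx
    simp only [Set.mem_union, Set.mem_iUnion, not_or, not_exists] at hcon
    obtain ⟨hAx, hCx⟩ := hcon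
    intro v hv
    by_cases hv0 : v = 0
    · simp [hv0]
    have hQ := hpos v hv0
    obtain ⟨a, ha⟩ := he2 v hv
    have hQa : ∑ j, ∑ k, v j * S j k * v k = ∑ l, a l ^ 2 := by
      rw [← he1 a]; simp only [ha]
    rw [hQa] at hQ ⊢
    set q := ∑ l, a l ^ 2 with hq
    let y : α → EuclideanSpace ℝ (Fin n) := fun l => WithLp.toLp 2 (fun i => ∑ j, x i j * e l j)
    have hy : ∀ b : α → ℝ, ‖∑ l, b l • y l‖ ^ 2 = ∑ i, (∑ j, x i j * ∑ l, b l * e l j) ^ 2 := by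
      intro b
      rw [EuclideanSpace.norm_sq_eq]
      refine Finset.sum_congr rfl fun i _ => ?_
      rw [Real.norm_eq_abs, sq_abs]
      congr 1
      simp only [WithLp.ofLp_sum, Finset.sum_apply, WithLp.ofLp_smul, Pi.smul_apply, smul_eq_mul, y,
        Finset.mul_sum]
      rw [Finset.sum_comm]
      refine Finset.sum_congr rfl fun j _ => Finset.sum_congr rfl fun l _ => by ring
    have hr : Real.sqrt n ^ 2 = n := Real.sq_sqrt (Nat.cast_nonneg n)
    have hnet := rs_net n hn (by simpa using hα) y (Real.sqrt n) (Real.sqrt_nonneg _) (by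
      intro l
      refine abs_le_of_sq_le_sq' ?_ (by positivity) |>.2
      rw [mul_pow, hr]
      have h1 := hAx l
      simp only [A, Set.mem_ofPred_eq, not_le] at h1
      have h2 := hy (Pi.single l 1)
      simp only [Pi.single_apply, ite_mul, one_mul, zero_mul, Finset.sum_ite_eq', Finset.mem_univ,
        if_true, ite_smul, one_smul, zero_smul] at h2
      rw [h2]; linarith) (by
      intro m hm
      refine abs_le_of_sq_le_sq' ?_ (by positivity) |>.2
      rw [div_pow, hr, hy]
      have h1 := hCx m
      simp only [C, Set.mem_ofPred_eq, not_and, not_le] at h1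
      have h2 := h1 hm
      simp only [w] at h2
      norm_num at h2 ⊢
      linarith) (fun l => a l / Real.sqrt q) (by
      simp only [div_pow]
      rw [← Finset.sum_div, Real.sq_sqrt hQ.le, ← hq, div_self hQ.ne'])
    have h3 : (Real.sqrt n / 20) ^ 2 ≤ ‖∑ l, (a l / Real.sqrt q) • y l‖ ^ 2 := by
      gcongr
    rw [hy, div_pow, hr] at h3
    have h4 : ∀ i, (∑ j, x i j * ∑ l, a l / Real.sqrt q * e l j) = (∑ j, x i j * v j) / Real.sqrt q := by
      intro i
      rw [Finset.sum_div]
      refine Finset.sum_congr rfl fun j _ => ?_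
      rw [ha j, mul_div_assoc, Finset.sum_div]
      congr 1
      exact Finset.sum_congr rfl fun l _ => by ring
    simp only [h4, div_pow, Real.sq_sqrt hQ.le] at h3
    rw [← Finset.sum_div, le_div_iff₀ hQ] at h3
    norm_num at h3 ⊢
    exact h3
  have hcard : Fintype.card G = (120 * n + 1) ^ α.card := by
    simp only [G, Fintype.card_fun, Fintype.card_coe, Int.card_Icc]
    congr 1
    omega
  calc N _ ≤ N ((⋃ l, A l) ∪ ⋃ m, C m) := measure_mono hsub
    _ ≤ N (⋃ l, A l) + N (⋃ m, C m) := measure_union_le _ _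
    _ ≤ ∑ l, N (A l) + ∑ m, N (C m) := add_le_add (measure_iUnion_fintype_le _ _) (measure_iUnion_fintype_le _ _)
    _ ≤ ∑ l : α, ENNReal.ofReal ((1 / 2) ^ n) + ∑ m : G, ENNReal.ofReal ((1 / 2) ^ n) :=
      add_le_add (Finset.sum_le_sum fun l _ => hA l) (Finset.sum_le_sum fun l _ => hC l)
    _ = ENNReal.ofReal ((α.card + (120 * n + 1) ^ α.card) * (1 / 2) ^ n) := by
      rw [Finset.sum_const, Finset.sum_const, Finset.card_univ, Finset.card_univ, hcard,
        Fintype.card_coe, nsmul_eq_mul, nsmul_eq_mul, ← add_mul, ENNReal.ofReal_mul (by positivity)]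
      congr 1
      rw [← Nat.cast_add, ← ENNReal.ofReal_natCast]
      congr 1
      push_cast
      ring
    _ ≤ _ := by
      apply ENNReal.ofReal_le_ofReal
      gcongr

lemma rs_union {p : ℕ} (S : Fin p → Fin p → ℝ) (hsymm : ∀ j k, S j k = S k j)
    (hpos : ∀ v : Fin p → ℝ, v ≠ 0 → 0 < ∑ j, ∑ k, v j * S j k * v k)
    (μ : Measure (Fin p → ℝ)) [IsProbabilityMeasure μ]
    (hgauss : ∀ v : Fin p → ℝ,
      Measure.map (fun x : Fin p → ℝ => ∑ j, v j * x j) μ =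
        ProbabilityTheory.gaussianReal 0
          (Real.toNNReal (∑ j, ∑ k, v j * S j k * v k)))
    (n : ℕ) (hn : 121 ≤ n) (hp : n < p) :
    Measure.pi (fun _ : Fin n => μ) {x | ¬ ∀ α : Finset (Fin p),
      (α.card : ℝ) < (Real.log (3 / 2) / 3) * n / Real.log p →
      ∀ v : Fin p → ℝ, (∀ j, j ∉ α → v j = 0) →
      n / 400 * (∑ j, ∑ k, v j * S j k * v k) ≤ ∑ i, (∑ j, x i j * v j) ^ 2} ≤
    ENNReal.ofReal (Real.exp 1 * ((n + 1) * (3 / 4) ^ n)) := by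
  classical
  have hn0 : (121 : ℝ) ≤ n := by exact_mod_cast hn
  have hp0 : (n : ℝ) + 1 ≤ p := by exact_mod_cast hp
  have hppos : (0 : ℝ) < p := by linarith
  have hlog1 : 1 ≤ Real.log p := by
    rw [Real.le_log_iff_exp_le hppos]
    have := Real.exp_one_lt_d9
    linarith
  have hl32 : Real.log (3 / 2) ≤ 1 := by
    have := Real.log_le_sub_one_of_pos (show (0 : ℝ) < 3 / 2 by norm_num)
    linarith
  let F : Finset (Finset (Fin p)) := Finset.univ.filter fun α =>
    (α.card : ℝ) < (Real.log (3 / 2) / 3) * n / Real.log p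
  let D : Finset (Fin p) → Set (Fin n → Fin p → ℝ) := fun α =>
    {x | ¬ ∀ v : Fin p → ℝ, (∀ j, j ∉ α → v j = 0) →
      n / 400 * (∑ j, ∑ k, v j * S j k * v k) ≤ ∑ i, (∑ j, x i j * v j) ^ 2}
  have hD : ∀ α ∈ F, Measure.pi (fun _ : Fin n => μ) (D α) ≤
      ENNReal.ofReal ((n + 1) * (3 / 4) ^ n * (1 / p) ^ α.card) := by
    intro α hα
    have hα' := (Finset.mem_filter.1 hα).2
    rw [lt_div_iff₀ (by linarith)] at hα'
    have hcard : α.card ≤ n := by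
      have : (α.card : ℝ) ≤ n := by
        have h0 : (0 : ℝ) ≤ α.card := Nat.cast_nonneg _
        nlinarith
      exact_mod_cast this
    refine (rs_alpha S hsymm hpos μ hgauss n (by omega) α hcard).trans ?_
    apply ENNReal.ofReal_le_ofReal
    have h1 : ((120 * n + 1 : ℝ)) ^ α.card ≤ (p : ℝ) ^ (2 * α.card) := by
      rw [pow_mul]
      gcongr
      nlinarith
    have h2 : (p : ℝ) ^ (3 * α.card) ≤ (3 / 2) ^ n := by
      rw [← Real.log_le_log_iff (by positivity) (by positivity), Real.log_pow, Real.log_pow]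
      push_cast
      nlinarith
    have h3 : (p : ℝ) ^ (2 * α.card) ≤ (3 / 2) ^ n * (1 / p) ^ α.card := by
      rw [one_div, inv_pow, ← div_eq_mul_inv, le_div_iff₀ (by positivity), ← pow_add]
      rw [show 2 * α.card + α.card = 3 * α.card by omega]
      exact h2
    have h4 : (1 : ℝ) ≤ (p : ℝ) ^ (2 * α.card) := one_le_pow₀ (by linarith)
    have h5 : (n : ℝ) + (120 * n + 1) ^ α.card ≤ (n + 1) * ((3 / 2) ^ n * (1 / p) ^ α.card) := by
      nlinarith
    calc ((n : ℝ) + (120 * n + 1) ^ α.card) * (1 / 2) ^ n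
        ≤ ((n + 1) * ((3 / 2) ^ n * (1 / p) ^ α.card)) * (1 / 2) ^ n := by gcongr
      _ = (n + 1) * ((3 / 2) ^ n * (1 / 2) ^ n) * (1 / p) ^ α.card := by ring
      _ = _ := by rw [← mul_pow]; norm_num
  have hsum : ∑ α : Finset (Fin p), ((1 : ℝ) / p) ^ α.card ≤ Real.exp 1 := by
    have h := Finset.prod_one_add (f := fun _ : Fin p => (1 : ℝ) / p) Finset.univ
    simp only [Finset.prod_const, Finset.powerset_univ] at h
    rw [← h, Finset.card_univ, Fintype.card_fin]
    calc (1 + (1 : ℝ) / p) ^ p ≤ Real.exp (1 / p) ^ p := by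
          gcongr
          linarith [Real.add_one_le_exp ((1 : ℝ) / p)]
      _ = Real.exp 1 := by
          rw [← Real.exp_nat_mul]
          congr 1
          field_simp
  calc _ ≤ Measure.pi (fun _ : Fin n => μ) (⋃ α ∈ F, D α) := by
        apply measure_mono
        intro x hx
        simp only [Set.mem_ofPred_eq, not_forall] at hx
        obtain ⟨α, h1, h2⟩ := hx
        simp only [Set.mem_iUnion]
        refine ⟨α, by simpa [F] using h1, ?_⟩
        simp only [D, Set.mem_ofPred_eq, not_forall]
        exact h2
    _ ≤ ∑ α ∈ F, Measure.pi (fun _ : Fin n => μ) (D α) := measure_biUnion_finset_le _ _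
    _ ≤ ∑ α ∈ F, ENNReal.ofReal ((n + 1) * (3 / 4) ^ n * (1 / p) ^ α.card) := Finset.sum_le_sum hD
    _ = ENNReal.ofReal (∑ α ∈ F, (n + 1) * (3 / 4) ^ n * (1 / p) ^ α.card) :=
        (ENNReal.ofReal_sum_of_nonneg fun α _ => by positivity).symm
    _ ≤ _ := by
        apply ENNReal.ofReal_le_ofReal
        rw [← Finset.mul_sum, mul_comm]
        gcongr
        refine le_trans (Finset.sum_le_sum_of_subset_of_nonneg (Finset.subset_univ F)
          fun α _ _ => by positivity) hsum


/-- Proposition 2 of the paper: for Gaussian random designs with `n` i.i.d. rows drawn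
from `N(0, Σ)` on `ℝ^{p(n)}`, where `Σ` is symmetric with smallest eigenvalue at least
`c₀ > 0` and `log p(n) = o(n)`, there exist constants `c, c̃ > 0` such that with
probability tending to one, every column submatrix of `n^{−1/2}X` with fewer than
`c̃·n/log p(n)` columns has smallest singular value at least `c`; that is, the robust
spark `κ_c` of `X` is at least `c̃·n/log p(n)` with asymptotic probability one.

The rows being i.i.d. `N(0, Σ)` is expressed by (i) the law of `X` being the `n`-fold
product of a fixed row distribution `μ n`, and (ii) every linear functional
`x ↦ Σⱼ v_j x_j` of the row distribution being Gaussian with mean `0` and variance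
`vᵀΣv`. -/
theorem robust_spark_gaussian_design
    (c₀ : ℝ) (hc₀ : 0 < c₀)
    (p : ℕ → ℕ) (hpn : ∀ n, n < p n)
    (hlog : (fun n => Real.log (p n)) =o[atTop] (fun n => (n : ℝ)))
    (S : ∀ n, Fin (p n) → Fin (p n) → ℝ)
    (hsymm : ∀ n, ∀ j k, S n j k = S n k j)
    (heig : ∀ n, ∀ v : Fin (p n) → ℝ,
      c₀ * ∑ j, (v j) ^ 2 ≤ ∑ j, ∑ k, v j * S n j k * v k)
    (Ω : ℕ → Type) [∀ n, MeasurableSpace (Ω n)]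
    (P : ∀ n, Measure (Ω n)) [∀ n, IsProbabilityMeasure (P n)]
    (X : ∀ n, Ω n → (Fin n → Fin (p n) → ℝ))
    (hXmeas : ∀ n, Measurable (X n))
    (μrow : ∀ n, Measure (Fin (p n) → ℝ))
    (hrows : ∀ n, Measure.map (X n) (P n) = Measure.pi fun _ : Fin n => μrow n)
    (hgauss : ∀ n, ∀ v : Fin (p n) → ℝ,
      Measure.map (fun x : Fin (p n) → ℝ => ∑ j, v j * x j) (μrow n) =
        ProbabilityTheory.gaussianReal 0
          (Real.toNNReal (∑ j, ∑ k, v j * S n j k * v k))) :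
    ∃ c : ℝ, 0 < c ∧ ∃ ct : ℝ, 0 < ct ∧
      Tendsto (fun n =>
        P n {ω | ∀ α : Finset (Fin (p n)), (α.card : ℝ) < ct * n / Real.log (p n) →
          ∀ v : Fin (p n) → ℝ, (∀ j, j ∉ α → v j = 0) →
            c * Real.sqrt (∑ j, (v j) ^ 2) ≤
              Real.sqrt ((1 / (n : ℝ)) * ∑ i, (∑ j, X n ω i j * v j) ^ 2)})
        atTop (nhds 1) := by
  refine ⟨Real.sqrt (c₀ / 400), by positivity, Real.log (3 / 2) / 3,
    div_pos (Real.log_pos (by norm_num)) (by norm_num), ?_⟩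
  have hpos : ∀ n, ∀ v : Fin (p n) → ℝ, v ≠ 0 → 0 < ∑ j, ∑ k, v j * S n j k * v k := by
    intro n v hv
    refine lt_of_lt_of_le (mul_pos hc₀ ?_) (heig n v)
    obtain ⟨j, hj⟩ := Function.ne_iff.1 hv
    exact Finset.sum_pos' (fun j _ => sq_nonneg _) ⟨j, Finset.mem_univ j, by have : v j ≠ 0 := hj; positivity⟩
  have hprob : ∀ n, IsProbabilityMeasure (μrow n) := by
    intro n
    have h1 : IsProbabilityMeasure
        (Measure.map (fun x : Fin (p n) → ℝ => ∑ j, (0 : Fin (p n) → ℝ) j * x j) (μrow n)) := by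
      rw [hgauss]; infer_instance
    constructor
    have h2 := h1.measure_univ
    rwa [Measure.map_apply (by fun_prop) MeasurableSet.univ, Set.preimage_univ] at h2
  have hlim : Tendsto (fun n : ℕ => 1 - ENNReal.ofReal (Real.exp 1 * ((n + 1) * (3 / 4) ^ n)))
      atTop (nhds 1) := by
    have h1 : Tendsto (fun n : ℕ => Real.exp 1 * (((n : ℝ) + 1) * (3 / 4) ^ n)) atTop (nhds 0) := by
      have h2 := tendsto_pow_const_mul_const_pow_of_abs_lt_one 1 (r := (3 / 4 : ℝ))
        (by rw [abs_of_pos] <;> norm_num)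
      have h3 := tendsto_pow_atTop_nhds_zero_of_lt_one (r := (3 / 4 : ℝ)) (by norm_num) (by norm_num)
      have := (h2.add h3).const_mul (Real.exp 1)
      simp only [add_zero, mul_zero, pow_one] at this
      refine this.congr fun n => by ring
    have h4 := ENNReal.Tendsto.sub (tendsto_const_nhds (x := (1 : ENNReal)))
      (ENNReal.tendsto_ofReal h1) (Or.inl ENNReal.one_ne_top)
    simpa using h4
  refine tendsto_of_tendsto_of_tendsto_of_le_of_le' hlim tendsto_const_nhds ?_
    (Eventually.of_forall fun n => prob_le_one)
  filter_upwards [eventually_ge_atTop 121] with n hn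
  have := hprob n
  have hU := rs_union (S n) (hsymm n) (hpos n) (μrow n) (hgauss n) n hn (hpn n)
  set Bad : Set (Fin n → Fin (p n) → ℝ) := {x | ¬ ∀ α : Finset (Fin (p n)),
      (α.card : ℝ) < (Real.log (3 / 2) / 3) * n / Real.log (p n) →
      ∀ v : Fin (p n) → ℝ, (∀ j, j ∉ α → v j = 0) →
      n / 400 * (∑ j, ∑ k, v j * S n j k * v k) ≤ ∑ i, (∑ j, x i j * v j) ^ 2} with hBad
  have hpre : P n (X n ⁻¹' Bad) ≤ ENNReal.ofReal (Real.exp 1 * ((n + 1) * (3 / 4) ^ n)) := by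
    refine le_trans ?_ hU
    rw [← hrows n]
    exact Measure.le_map_apply (hXmeas n).aemeasurable _
  set Good : Set (Ω n) := {ω | ∀ α : Finset (Fin (p n)),
      (α.card : ℝ) < Real.log (3 / 2) / 3 * n / Real.log (p n) →
          ∀ v : Fin (p n) → ℝ, (∀ j, j ∉ α → v j = 0) →
            Real.sqrt (c₀ / 400) * Real.sqrt (∑ j, (v j) ^ 2) ≤
              Real.sqrt ((1 / (n : ℝ)) * ∑ i, (∑ j, X n ω i j * v j) ^ 2)} with hGood
  have hcov : (Set.univ : Set (Ω n)) ⊆ Good ∪ X n ⁻¹' Bad := by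
    intro ω _
    by_cases hω : X n ω ∈ Bad
    · exact Or.inr hω
    · left
      simp only [hBad, Set.mem_ofPred_eq, not_not] at hω
      simp only [hGood, Set.mem_ofPred_eq]
      intro α hα v hv
      have h1 := hω α hα v hv
      rw [← Real.sqrt_mul (by positivity)]
      apply Real.sqrt_le_sqrt
      have hn0 : (0 : ℝ) < n := by exact_mod_cast (show 0 < n by omega)
      rw [one_div, ← div_eq_inv_mul, le_div_iff₀ hn0]
      have h2 := mul_le_mul_of_nonneg_left (heig n v) (show (0 : ℝ) ≤ n / 400 by positivity)
      linarith
  have h1 : 1 ≤ P n Good + P n (X n ⁻¹' Bad) := by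
    rw [← measure_univ (μ := P n)]
    exact (measure_mono hcov).trans (measure_union_le _ _)
  rw [tsub_le_iff_right]
  exact h1.trans (by gcongr)
end
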